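/- Let Δ be a simplicial complex with d = dim k[Δ]. If the reduced homology H̃_{i−1}([Δ]_{>j}; k) vanishes whenever i + j < d and 0 ≤ i ≤ ℓ, then k[Δ] satisfies Serre's condition (S_ℓ). -/

import Mathlib

open Finset

/-- An abstract simplicial complex on vertex type `V`, given by a finite, downward closed
family of finite subsets of `V` (its faces). -/
structure SComplex (V : Type) [DecidableEq V] where
  faces : Finset (Finset V)
  down_closed : ∀ ⦃s t : Finset V⦄, s ∈ faces → t ⊆ s → t ∈ faces

namespace SComplex

variable {V : Type} [DecidableEq V]

/-- `K.rank = d = dim k[Δ] = dim Δ + 1` is the maximal cardinality of a face of `K`. -/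
def rank (K : SComplex V) : ℕ := K.faces.sup Finset.card

/-- `F` is a facet (maximal face) of `K`. -/
def IsFacet (K : SComplex V) (F : Finset V) : Prop :=
  F ∈ K.faces ∧ ∀ G ∈ K.faces, F ⊆ G → F = G

/-- `K` is pure: all facets have the maximal cardinality `K.rank`. -/
def Pure (K : SComplex V) : Prop := ∀ F : Finset V, K.IsFacet F → F.card = K.rank

/-- The link `lk_K(T) = {G ∈ K | T ∪ G ∈ K, T ∩ G = ∅}`. -/
def link (K : SComplex V) (T : Finset V) : SComplex V where
  faces := K.faces.filter fun G => Disjoint T G ∧ T ∪ G ∈ K.faces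
  down_closed := by
    intro s t hs hts
    simp only [Finset.mem_filter] at hs ⊢
    exact ⟨K.down_closed hs.1 hts, hs.2.1.mono_right hts,
      K.down_closed hs.2.2 (Finset.union_subset_union_right hts)⟩

/-- The anti-star `ast_K(T) = {G ∈ K | T ∩ G = ∅}`. -/
def antistar (K : SComplex V) (T : Finset V) : SComplex V where
  faces := K.faces.filter fun G => Disjoint T G
  down_closed := by
    intro s t hs hts
    simp only [Finset.mem_filter] at hs ⊢
    exact ⟨K.down_closed hs.1 hts, hs.2.mono_right hts⟩

/-- The induced subcomplex of `K` on a set `W` of vertices. -/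
def restrict (K : SComplex V) (W : Finset V) : SComplex V where
  faces := K.faces.filter fun G => G ⊆ W
  down_closed := by
    intro s t hs hts
    simp only [Finset.mem_filter] at hs ⊢
    exact ⟨K.down_closed hs.1 hts, hts.trans hs.2⟩

/-- The subcomplex of faces of cardinality at most `m`; as cardinality = dimension + 1, this is
the `(m-1)`-skeleton `Δ^{(m-1)}`. -/
def skelCard (K : SComplex V) (m : ℕ) : SComplex V where
  faces := K.faces.filter fun G => G.card ≤ m
  down_closed := by
    intro s t hs hts
    simp only [Finset.mem_filter] at hs ⊢
    exact ⟨K.down_closed hs.1 hts, le_trans (Finset.card_le_card hts) hs.2⟩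

/-- `K.trunc j` is `[Δ]_{>j}`, the order complex of the poset of faces of `K` of cardinality
(equivalently, of height in the face poset) `> j`: its faces are the chains of such faces.
For `j = 0` this is the barycentric subdivision of `K`. -/
def trunc (K : SComplex V) (j : ℕ) : SComplex (Finset V) where
  faces := K.faces.powerset.filter fun C =>
    (∀ s ∈ C, j < s.card) ∧ ∀ s ∈ C, ∀ t ∈ C, s ⊆ t ∨ t ⊆ s
  down_closed := by
    intro s t hs hts
    simp only [Finset.mem_powerset, Finset.mem_filter] at hs ⊢
    exact ⟨hts.trans hs.1, fun a ha => hs.2.1 a (hts ha),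
      fun a ha b hb => hs.2.2 a (hts ha) b (hts hb)⟩

/-- `Δ_A`: the complex obtained from `K` by deleting all faces containing a member of `A`. -/
def deleteAbove (K : SComplex V) (A : Finset (Finset V)) : SComplex V where
  faces := K.faces.filter fun s => ∀ τ ∈ A, ¬ τ ⊆ s
  down_closed := by
    intro s t hs hts
    simp only [Finset.mem_filter] at hs ⊢
    exact ⟨K.down_closed hs.1 hts, fun τ hτ hsub => hs.2 τ hτ (hsub.trans hts)⟩

/-- The number of faces of `K` of cardinality `i`, i.e. the face number `f_{i-1}(K)`. -/
def faceCount (K : SComplex V) (i : ℕ) : ℕ := (K.faces.filter fun s => s.card = i).card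

/-- The Euler characteristic `χ(K) = Σ_{i ≥ 0} (-1)^i f_i(K)`. -/
def eulerChar (K : SComplex V) : ℤ :=
  ∑ s ∈ K.faces.filter (fun s => s ≠ ∅), (-1 : ℤ) ^ (s.card - 1)

/-- The reduced Euler characteristic `χ̃(K) = χ(K) - 1`. -/
def reducedEulerChar (K : SComplex V) : ℤ := eulerChar K - 1

end SComplex

/-! ### Simplicial homology with coefficients in a field `k` -/

/-- An arbitrary linear order on a finite type. -/
noncomputable def arbOrder (V : Type) [Fintype V] : LinearOrder V :=
  LinearOrder.lift' (Fintype.equivFin V) (Equiv.injective _)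

namespace SComplex

variable {V : Type} [DecidableEq V]

/-- The faces of `K` of cardinality `n`, as a type. -/
def Faces (K : SComplex V) (n : ℕ) : Type :=
  {s : Finset V // s ∈ K.faces ∧ s.card = n}

/-- The space of reduced simplicial `n`-chains of `K`: formal `k`-linear combinations of the
faces of cardinality `n` (such a face has dimension `n - 1`; the empty face sits in degree `0`,
which produces *reduced* homology). -/
abbrev ChainsOf (k : Type) [Field k] (K : SComplex V) (n : ℕ) : Type := Faces K n →₀ k

variable (k : Type) [Field k] [Fintype V]

/-- The simplicial boundary map, with signs determined by an arbitrary but fixed linear order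
on the vertices. -/
noncomputable def bd (K : SComplex V) (n : ℕ) :
    ChainsOf k K n →ₗ[k] ChainsOf k K (n - 1) :=
  letI : LinearOrder V := arbOrder V
  Finsupp.lsum k fun s : Faces K n =>
    LinearMap.toSpanSingleton k (ChainsOf k K (n - 1))
      (∑ x ∈ s.1.attach,
        ((-1 : k) ^ (s.1.filter (fun y => y < x.1)).card) •
          Finsupp.single
            (⟨s.1.erase x.1,
              K.down_closed s.2.1 (Finset.erase_subset _ _),
              by rw [Finset.card_erase_of_mem x.2, s.2.2]⟩ : Faces K (n - 1))
            (1 : k))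

/-- `HVanish k K i` says that the reduced simplicial homology `H̃_{i-1}(K; k)` vanishes.
Note the indexing convention: the index `i` is the *cardinality* of the relevant faces, so this
is reduced homology in topological degree `i - 1`; e.g. `HVanish k K 1` says `H̃₀(K; k) = 0`
(`K` is connected and nonempty) and `HVanish k K 0` says `H̃₋₁(K; k) = 0` (`K` has a face).
Since the cycles in degree `i - 1` are `ker ∂ᵢ` and the boundaries are `im ∂ᵢ₊₁`, and the
boundaries are always contained in the cycles, vanishing of homology says exactly that every
cycle is a boundary. -/
def HVanish (K : SComplex V) (i : ℕ) : Prop :=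
  LinearMap.ker (bd k K i) ≤ LinearMap.range (bd k K (i + 1))

/-- `redHomologyRank k K i` is the dimension `dim_k H̃_{i-1}(K; k)` of the reduced simplicial
homology of `K` in topological degree `i - 1` (cardinality index `i`), namely the dimension of
the cycles `ker ∂ᵢ` modulo the boundaries `im ∂ᵢ₊₁`. -/
noncomputable def redHomologyRank (K : SComplex V) (i : ℕ) : ℕ :=
  Module.finrank k ↥(LinearMap.ker (bd k K i)) -
    Module.finrank k ↥(LinearMap.range (bd k K (i + 1)) ⊓ LinearMap.ker (bd k K i))

end SComplex

/-! ### Depth, Serre conditions, and Stanley–Reisner rings -/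

/-- The length of a longest regular sequence on `R` contained in the ideal `I`
(the `I`-depth of `R`). -/
noncomputable def depthIn (R : Type) [CommRing R] (I : Ideal R) : ℕ :=
  sSup {n : ℕ | ∃ rs : List R, rs.length = n ∧ (∀ r ∈ rs, r ∈ I) ∧
    RingTheory.Sequence.IsRegular R rs}

/-- Serre's condition `(S_ℓ)` for a commutative ring:
`depth R_p ≥ min {ℓ, dim R_p}` for every prime `p`. -/
def SerreCondS (ℓ : ℕ) (R : Type) [CommRing R] : Prop :=
  ∀ (p : Ideal R) (hp : p.IsPrime),
    haveI := hp
    min ((ℓ : ℕ∞) : WithBot ℕ∞) (ringKrullDim (Localization.AtPrime p)) ≤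
      ((depthIn (Localization.AtPrime p)
        (IsLocalRing.maximalIdeal (Localization.AtPrime p)) : ℕ∞) : WithBot ℕ∞)

namespace SComplex

variable {V : Type} [DecidableEq V] (k : Type) [Field k]

/-- The Stanley–Reisner ideal of `K`: generated by the squarefree monomials supported on
non-faces. -/
noncomputable def srIdeal (K : SComplex V) : Ideal (MvPolynomial V k) :=
  Ideal.span ((fun s : Finset V => ∏ v ∈ s, MvPolynomial.X v) '' {s : Finset V | s ∉ K.faces})

/-- The Stanley–Reisner ring `k[Δ]`. -/
noncomputable abbrev SRRing (K : SComplex V) : Type := MvPolynomial V k ⧸ srIdeal k K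

/-- `depth k[Δ]`: the depth of the Stanley–Reisner ring with respect to its irrelevant
(graded maximal) ideal. -/
noncomputable def srDepth (K : SComplex V) : ℕ :=
  depthIn (SRRing k K)
    (Ideal.span (Set.range fun v : V => Ideal.Quotient.mk (srIdeal k K) (MvPolynomial.X v)))

/-- `k[Δ]` satisfies Serre's condition `(S_ℓ)`. -/
def SerreS (ℓ : ℕ) (K : SComplex V) : Prop := SerreCondS ℓ (SRRing k K)

end SComplex

/-! ### Order complexes of finite posets -/

/-- The order complex `O(P)` of a finite poset: its faces are the chains of `P`. -/
def orderComplex (P : Type) [DecidableEq P] [Fintype P] [PartialOrder P]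
    [∀ a b : P, Decidable (a ≤ b)] : SComplex P where
  faces := Finset.univ.filter fun C : Finset P => ∀ a ∈ C, ∀ b ∈ C, a ≤ b ∨ b ≤ a
  down_closed := by
    intro s t hs hts
    simp only [Finset.mem_filter, Finset.mem_univ, true_and] at hs ⊢
    exact fun a ha b hb => hs a (hts ha) b (hts hb)

/-- The height of an element of a finite poset: the maximal cardinality of a chain with top
element `p` (so minimal elements have height `1`). -/
def pheight {P : Type} [DecidableEq P] [Fintype P] [PartialOrder P]
    [∀ a b : P, Decidable (a ≤ b)] (p : P) : ℕ :=
  Finset.sup (Finset.univ.filter fun C : Finset P =>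
    p ∈ C ∧ (∀ a ∈ C, a ≤ p) ∧ ∀ a ∈ C, ∀ b ∈ C, a ≤ b ∨ b ≤ a) Finset.card

/-- The height `ht P` of a finite poset: the maximal cardinality of a chain. -/
def pheightMax (P : Type) [DecidableEq P] [Fintype P] [PartialOrder P]
    [∀ a b : P, Decidable (a ≤ b)] : ℕ :=
  Finset.univ.sup (pheight (P := P))

/-- `O(P_{>j})`: the full subcomplex of the order complex on the elements of height `> j`. -/
def ocAbove (P : Type) [DecidableEq P] [Fintype P] [PartialOrder P]
    [∀ a b : P, Decidable (a ≤ b)] (j : ℕ) : SComplex P :=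
  (orderComplex P).restrict (Finset.univ.filter fun p => j < pheight p)

/-- The face poset `F(Δ)` of a simplicial complex: the nonempty faces, ordered by inclusion. -/
abbrev SComplex.FacePoset {V : Type} [DecidableEq V] (K : SComplex V) : Type :=
  {s : Finset V // s ∈ K.faces ∧ s ≠ ∅}

instance {V : Type} [DecidableEq V] (K : SComplex V) :
    ∀ a b : K.FacePoset, Decidable (a ≤ b) := fun a b =>
  decidable_of_iff (a.1 ≤ b.1) Subtype.coe_le_coe

/-!
The vanishing of the homology of the truncations forces the vanishing of the homology of links. The
faces strictly above a face `F` form a poset isomorphic to the face poset of the link of `F`, and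
`[Δ]_{>j}` is obtained from `[Δ]_{>j+1}` by coning, for each face `F` of cardinality `j + 1`, over
the order complex of the faces above `F`; hence the order complex above `F` is acyclic in low
degrees. Barycentric subdivision carries this to the link of `F`, and a Mayer–Vietoris argument
carries it to the links of all the complexes obtained by deleting vertices.

By duality, the multigraded strands of the Koszul cochain complex of `k[Δ]` on the variables are
cochain complexes of such subcomplexes, so the Koszul complex is exact in degrees below `min ℓ d`
and the ideal of the variables contains a regular sequence of that length. This settles the prime
containing all variables. A prime `p` missing the variable of a vertex `v` is handled by induction:
after inverting that variable, `k[Δ]` becomes a localization of the polynomial ring over the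
Stanley–Reisner ring of the link of `v`.
-/

/-- The exterior algebra on the free module with basis `V`. The wedge product of the vertices of a
finite set in some order is that set with an orientation. -/
abbrev VertexExterior (R V : Type*) [CommRing R] : Type _ := ExteriorAlgebra R (V →₀ R)

namespace VertexExterior

section Generators

variable (R : Type*) [CommRing R] {V : Type*}

/-- The generator of the exterior algebra attached to a vertex. -/
noncomputable def gen (v : V) : VertexExterior R V := ExteriorAlgebra.ι R (Finsupp.single v 1)

/-- The wedge product of a list of vertices. -/
noncomputable def listProd (l : List V) : VertexExterior R V := (l.map (gen R)).prod

/-- The simplicial boundary, encoded as contraction with the sum of all coordinates. -/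
noncomputable def boundary : VertexExterior R V →ₗ[R] VertexExterior R V :=
  CliffordAlgebra.contractLeft (Finsupp.linearCombination R fun _ : V => (1 : R))

/-- Contraction with the coordinate of `v`: it takes a chain to the boundary part of its star
at `v`, that is, to a chain of the link of `v`. -/
noncomputable def contract (v : V) : VertexExterior R V →ₗ[R] VertexExterior R V :=
  CliffordAlgebra.contractLeft (Finsupp.lapply v)

variable {R}

@[simp] lemma listProd_nil : listProd R ([] : List V) = 1 := rfl

@[simp] lemma listProd_cons (v : V) (l : List V) :
    listProd R (v :: l) = gen R v * listProd R l := by simp [listProd]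

@[simp] lemma boundary_gen_mul (v : V) (x : VertexExterior R V) :
    boundary R (gen R v * x) = x - gen R v * boundary R x := by
  simp [boundary, gen, ExteriorAlgebra.ι, CliffordAlgebra.contractLeft_ι_mul]

@[simp] lemma boundary_one : boundary R (1 : VertexExterior R V) = 0 :=
  CliffordAlgebra.contractLeft_one (Q := 0) _

lemma contract_one (v : V) : contract R v (1 : VertexExterior R V) = 0 :=
  CliffordAlgebra.contractLeft_one (Q := 0) _

lemma contract_gen_mul_self (v : V) (x : VertexExterior R V) :
    contract R v (gen R v * x) = x - gen R v * contract R v x := by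
  simp [contract, gen, ExteriorAlgebra.ι, CliffordAlgebra.contractLeft_ι_mul]

lemma contract_gen_mul_of_ne {u v : V} (h : u ≠ v) (x : VertexExterior R V) :
    contract R v (gen R u * x) = - (gen R u * contract R v x) := by
  simp [contract, gen, ExteriorAlgebra.ι, CliffordAlgebra.contractLeft_ι_mul,
    Finsupp.single_eq_of_ne h.symm]

lemma boundary_contract (v : V) (x : VertexExterior R V) :
    boundary R (contract R v x) = - contract R v (boundary R x) :=
  CliffordAlgebra.contractLeft_comm _ _ _

lemma gen_mul_gen_mul_self (v : V) (x : VertexExterior R V) : gen R v * (gen R v * x) = 0 := by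
  rw [← mul_assoc, gen, ExteriorAlgebra.ι_sq_zero, zero_mul]

lemma gen_mul_gen_mul_swap (u v : V) (x : VertexExterior R V) :
    gen R u * (gen R v * x) = - (gen R v * (gen R u * x)) := by
  rw [eq_neg_iff_add_eq_zero, ← mul_assoc, ← mul_assoc, ← add_mul, gen, gen,
    ExteriorAlgebra.ι_add_mul_swap, zero_mul]

lemma gen_mul_listProd_of_mem {v : V} {l : List V} (h : v ∈ l) :
    gen R v * listProd R l = 0 := by
  induction l with
  | nil => simp at h
  | cons u l ih =>
    rw [listProd_cons]
    rcases List.mem_cons.1 h with rfl | h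
    · exact gen_mul_gen_mul_self _ _
    · rw [gen_mul_gen_mul_swap, ih h, mul_zero, neg_zero]

lemma listProd_eq_zero_of_not_nodup {l : List V} (h : ¬ l.Nodup) : listProd R l = 0 := by
  induction l with
  | nil => simp at h
  | cons u l ih =>
    rw [listProd_cons]
    by_cases hu : u ∈ l
    · exact gen_mul_listProd_of_mem hu
    · rw [ih (fun hl => h (List.nodup_cons.2 ⟨hu, hl⟩)), mul_zero]

lemma contract_listProd_of_notMem {v : V} {l : List V} (h : v ∉ l) :
    contract R v (listProd R l) = 0 := by
  induction l with
  | nil => simpa using contract_one v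
  | cons u l ih =>
    rw [List.mem_cons, not_or] at h
    rw [listProd_cons, contract_gen_mul_of_ne (Ne.symm h.1), ih h.2, mul_zero, neg_zero]

lemma contract_listProd_cons_of_notMem {v : V} {l : List V} (h : v ∉ l) :
    contract R v (listProd R (v :: l)) = listProd R l := by
  rw [listProd_cons, contract_gen_mul_self, contract_listProd_of_notMem h, mul_zero, sub_zero]

lemma listProd_perm {l l' : List V} (h : l.Perm l') :
    listProd R l = listProd R l' ∨ listProd R l = - listProd R l' := by
  induction h with
  | nil => simp
  | cons x _ ih => rcases ih with ih | ih <;> simp [ih]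
  | swap x y l => exact .inr (by simpa using gen_mul_gen_mul_swap y x (listProd R l))
  | trans _ _ ih₁ ih₂ => rcases ih₁ with h₁ | h₁ <;> rcases ih₂ with h₂ | h₂ <;> simp [h₁, h₂]

/-- The map of exterior algebras induced by a map of vertices. -/
noncomputable def mapVertices {W : Type*} (f : V → W) :
    VertexExterior R V →ₐ[R] VertexExterior R W :=
  ExteriorAlgebra.map (Finsupp.lmapDomain R R f)

@[simp] lemma mapVertices_gen {W : Type*} (f : V → W) (v : V) :
    mapVertices f (gen R v) = gen R (f v) := by
  simp [mapVertices, gen]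

lemma mapVertices_listProd {W : Type*} (f : V → W) (l : List V) :
    mapVertices f (listProd R l) = listProd R (l.map f) := by
  induction l with
  | nil => simp
  | cons v l ih => simp [ih]

lemma boundary_mapVertices {W : Type*} (f : V → W) (x : VertexExterior R V) :
    boundary R (mapVertices f x) = mapVertices f (boundary R x) := by
  induction x using CliffordAlgebra.left_induction with
  | algebraMap r => simp [boundary, mapVertices, Algebra.algebraMap_eq_smul_one]
  | add x y hx hy => simp only [map_add, hx, hy]
  | ι_mul x m hx =>
    induction m using Finsupp.induction_linear with
    | zero => simp
    | add m m' h h' => simp only [map_add, add_mul, h, h']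
    | single v c =>
      have hv : CliffordAlgebra.ι 0 (Finsupp.single v c) = c • gen R v := by
        rw [gen, ← map_smul, Finsupp.smul_single_one]
      simp [hv, hx]

end Generators

section Chains

variable (R : Type*) [CommRing R] {V : Type*} [DecidableEq V]

/-- The chains of degree `n` supported on a family `P` of finite sets. Graded by cardinality, so
that the empty set sits in degree `0`; spanned by products in all orders, so that no order on `V`
has to be chosen. -/
noncomputable def chainSpan (P : Set (Finset V)) (n : ℕ) : Submodule R (VertexExterior R V) :=
  Submodule.span R (listProd R '' {l | l.Nodup ∧ l.length = n ∧ l.toFinset ∈ P})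

/-- Vanishing of the reduced homology of a family of finite sets in the degree given by the
cardinality `n`: every cycle is a boundary. -/
def Acyclic (P : Set (Finset V)) (n : ℕ) : Prop :=
  ∀ z ∈ chainSpan R P n, boundary R z = 0 → ∃ w ∈ chainSpan R P (n + 1), boundary R w = z

variable {R} {P Q : Set (Finset V)} {n : ℕ}

lemma listProd_mem_chainSpan {l : List V} (hl : l.length = n) (hP : l.toFinset ∈ P) :
    listProd R l ∈ chainSpan R P n := by
  by_cases h : l.Nodup
  · exact Submodule.subset_span ⟨l, ⟨h, hl, hP⟩, rfl⟩
  · rw [listProd_eq_zero_of_not_nodup h]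
    exact zero_mem _

lemma chainSpan_mono (h : P ⊆ Q) (n : ℕ) : chainSpan R P n ≤ chainSpan R Q n :=
  Submodule.span_mono (Set.image_mono fun _ ⟨h₁, h₂, h₃⟩ => ⟨h₁, h₂, h h₃⟩)

lemma chainSpan_le {S : Submodule R (VertexExterior R V)}
    (h : ∀ l : List V, l.Nodup → l.length = n → l.toFinset ∈ P → listProd R l ∈ S) :
    chainSpan R P n ≤ S :=
  Submodule.span_le.2 (Set.image_subset_iff.2 fun l ⟨h₁, h₂, h₃⟩ => h l h₁ h₂ h₃)

/-- A product in which `v` occurs is, up to sign, one in which `v` comes first. -/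
lemma chainSpan_le_of_cons {S : Submodule R (VertexExterior R V)} (v : V)
    (h : ∀ l : List V, v ∉ l → l.length = n → l.toFinset ∈ P → listProd R l ∈ S)
    (h' : ∀ l : List V, v ∉ l → l.length + 1 = n → insert v l.toFinset ∈ P →
      listProd R (v :: l) ∈ S) : chainSpan R P n ≤ S := by
  refine chainSpan_le fun l hl hn hP => ?_
  by_cases hv : v ∈ l
  · have hperm := List.perm_cons_erase hv
    have hmem : listProd R (v :: l.erase v) ∈ S := by
      refine h' _ hl.not_mem_erase ?_ ?_
      · rw [← hn, hperm.length_eq, List.length_cons]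
      · rwa [← List.toFinset_cons, ← List.toFinset_eq_of_perm _ _ hperm]
    rcases listProd_perm (R := R) hperm with e | e <;> rw [e]
    exacts [hmem, neg_mem hmem]
  · exact h l hv hn hP

lemma gen_mul_mem_chainSpan {v : V} (h : ∀ s ∈ P, insert v s ∈ Q) {x : VertexExterior R V}
    (hx : x ∈ chainSpan R P n) : gen R v * x ∈ chainSpan R Q (n + 1) := by
  suffices chainSpan R P n ≤ (chainSpan R Q (n + 1)).comap (LinearMap.mulLeft R (gen R v)) from
    this hx
  refine chainSpan_le fun l _ hn hP => ?_
  rw [Submodule.mem_comap, LinearMap.mulLeft_apply, ← listProd_cons]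
  exact listProd_mem_chainSpan (by simp [hn]) (by simpa using h _ hP)

lemma mapVertices_mem_chainSpan {W : Type*} [DecidableEq W] {f : V → W} {P : Set (Finset V)}
    {Q : Set (Finset W)} {n : ℕ} (h : ∀ s ∈ P, s.image f ∈ Q) {x : VertexExterior R V}
    (hx : x ∈ chainSpan R P n) : mapVertices f x ∈ chainSpan R Q n := by
  suffices chainSpan R P n ≤ (chainSpan R Q n).comap (mapVertices f).toLinearMap from this hx
  refine chainSpan_le fun l _ hn hP => ?_
  rw [Submodule.mem_comap, AlgHom.toLinearMap_apply, mapVertices_listProd]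
  refine listProd_mem_chainSpan (by simp [hn]) ?_
  convert h _ hP
  ext
  simp

lemma contract_mem_chainSpan {v : V} (h : ∀ s, v ∉ s → insert v s ∈ P → s ∈ Q)
    {x : VertexExterior R V} (hx : x ∈ chainSpan R P (n + 1)) :
    contract R v x ∈ chainSpan R Q n := by
  suffices chainSpan R P (n + 1) ≤ (chainSpan R Q n).comap (contract R v) from this hx
  refine chainSpan_le_of_cons v (fun l hv _ _ => ?_) fun l hv hn hP => ?_
  · rw [Submodule.mem_comap, contract_listProd_of_notMem hv]
    exact zero_mem _
  · rw [Submodule.mem_comap, contract_listProd_cons_of_notMem hv]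
    exact listProd_mem_chainSpan (Nat.succ_injective hn) (h _ (by simpa using hv) hP)

lemma contract_eq_zero {v : V} (h : ∀ s ∈ P, v ∉ s) {x : VertexExterior R V}
    (hx : x ∈ chainSpan R P n) : contract R v x = 0 := by
  suffices chainSpan R P n ≤ LinearMap.ker (contract R v) from this hx
  exact chainSpan_le fun l _ _ hP => contract_listProd_of_notMem (by simpa using h _ hP)

lemma sub_gen_mul_contract_mem_chainSpan {v : V} (h : ∀ s ∈ P, v ∉ s → s ∈ Q)
    {x : VertexExterior R V} (hx : x ∈ chainSpan R P n) :
    x - gen R v * contract R v x ∈ chainSpan R Q n := by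
  suffices chainSpan R P n ≤ (chainSpan R Q n).comap
    (LinearMap.id - LinearMap.mulLeft R (gen R v) ∘ₗ contract R v) from this hx
  refine chainSpan_le_of_cons v (fun l hv hn hP => ?_) fun l hv _ _ => ?_ <;>
    simp only [Submodule.mem_comap, LinearMap.sub_apply, LinearMap.id_apply,
      LinearMap.comp_apply, LinearMap.mulLeft_apply]
  · rw [contract_listProd_of_notMem hv, mul_zero, sub_zero]
    exact listProd_mem_chainSpan hn (h _ hP (by simpa using hv))
  · rw [contract_listProd_cons_of_notMem hv, listProd_cons, sub_self]
    exact zero_mem _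

/-- This is the Mayer–Vietoris sequence for `P`, covered by the deletion and the star of `v`. -/
lemma Acyclic.deletion (v : V) (hP : IsLowerSet P) (h₁ : Acyclic R P n)
    (h₂ : Acyclic R {s | v ∉ s ∧ insert v s ∈ P} n) : Acyclic R {s ∈ P | v ∉ s} n := by
  intro z hz hbz
  obtain ⟨w, hw, rfl⟩ := h₁ z (chainSpan_mono (fun s hs => hs.1) n hz) hbz
  have hdz : contract R v (boundary R w) = 0 := contract_eq_zero (fun s hs => hs.2) hz
  have hdw : contract R v w ∈ chainSpan R {s | v ∉ s ∧ insert v s ∈ P} n :=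
    contract_mem_chainSpan (fun _ => And.intro) hw
  obtain ⟨u, hu, hbu⟩ := h₂ _ hdw (by rw [boundary_contract, hdz, neg_zero])
  refine ⟨w - gen R v * contract R v w + u, add_mem ?_ ?_, ?_⟩
  · exact sub_gen_mul_contract_mem_chainSpan (fun _ => And.intro) hw
  · exact chainSpan_mono (fun s hs => And.intro (hP (subset_insert v s) hs.2) hs.1) _ hu
  · rw [map_add, map_sub, boundary_gen_mul, hbu, boundary_contract, hdz]
    simp

/-- A cycle of the link bounds in `P` and is coned off by `v`; the two fillings together form a
cycle of `Q`, and the star of `v` in a filling of that is a filling in the link. -/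
lemma Acyclic.link (v : V) (hPQ : P ⊆ Q) (hP : ∀ s ∈ P, v ∉ s)
    (hL : {s | v ∉ s ∧ insert v s ∈ Q} ⊆ P) (h₁ : Acyclic R P n) (h₂ : Acyclic R Q (n + 1)) :
    Acyclic R {s | v ∉ s ∧ insert v s ∈ Q} n := by
  intro z hz hbz
  obtain ⟨w, hw, hbw⟩ := h₁ z (chainSpan_mono hL n hz) hbz
  have hmem : gen R v * z - w ∈ chainSpan R Q (n + 1) :=
    sub_mem (gen_mul_mem_chainSpan (fun s hs => hs.2) hz) (chainSpan_mono hPQ _ hw)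
  obtain ⟨u, hu, hbu⟩ := h₂ _ hmem (by simp [hbz, hbw])
  refine ⟨- contract R v u, neg_mem (contract_mem_chainSpan (fun _ => And.intro) hu), ?_⟩
  rw [map_neg, boundary_contract, neg_neg, hbu, map_sub, contract_gen_mul_self,
    contract_eq_zero (fun s hs => hs.1) hz, contract_eq_zero hP hw, mul_zero, sub_zero, sub_zero]

lemma Acyclic.of_cone (v : V) (h : ∀ s ∈ P, insert v s ∈ P) (n : ℕ) : Acyclic R P n :=
  fun z hz hbz => ⟨gen R v * z, gen_mul_mem_chainSpan h hz,
    by rw [boundary_gen_mul, hbz, mul_zero, sub_zero]⟩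

lemma acyclic_empty (n : ℕ) : Acyclic R (∅ : Set (Finset V)) n :=
  fun _ hz _ => ⟨0, zero_mem _, by simpa [chainSpan, eq_comm] using hz⟩

/-- A chain map `i` with a left inverse induced by a map of vertices exhibits the homology of `P`
as a direct summand of that of `Q`. -/
lemma Acyclic.of_retract {W : Type*} [DecidableEq W] {Q : Set (Finset W)} {n : ℕ}
    (i : VertexExterior R V →ₗ[R] VertexExterior R W) (f : W → V)
    (hi : ∀ x, boundary R (i x) = i (boundary R x))
    (hPQ : ∀ x ∈ chainSpan R P n, i x ∈ chainSpan R Q n) (hQP : ∀ s ∈ Q, s.image f ∈ P)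
    (hfi : ∀ x ∈ chainSpan R P n, mapVertices f (i x) = x) (h : Acyclic R Q n) :
    Acyclic R P n := by
  intro z hz hbz
  obtain ⟨w, hw, hbw⟩ := h (i z) (hPQ z hz) (by rw [hi, hbz, map_zero])
  exact ⟨mapVertices f w, mapVertices_mem_chainSpan hQP hw,
    by rw [boundary_mapVertices, hbw, hfi z hz]⟩

end Chains

/-- The sign of `v` in `s`: the parity of the number of elements of `s` below `v`. -/
def vertexSign {V : Type*} [LinearOrder V] (v : V) (s : Finset V) : ℤ :=
  (-1) ^ #{y ∈ s | y < v}

section Signs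

variable {V : Type*} [LinearOrder V]

lemma vertexSign_mul_self (v : V) (s : Finset V) : vertexSign v s * vertexSign v s = 1 := by
  rw [vertexSign, ← mul_pow, neg_one_mul, neg_neg, one_pow]

lemma vertexSign_eq_one_of_forall_lt {v : V} {s : Finset V} (h : ∀ x ∈ s, v < x) :
    vertexSign v s = 1 := by
  rw [vertexSign, filter_eq_empty_iff.2 fun x hx => (h x hx).not_gt, card_empty, pow_zero]

variable [DecidableEq V]

lemma vertexSign_insert_of_lt {u v : V} {s : Finset V} (hu : u ∉ s) (h : u < v) :
    vertexSign v (insert u s) = - vertexSign v s := by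
  rw [vertexSign, filter_insert, if_pos h, card_insert_of_notMem (by simp [hu]), pow_succ,
    mul_neg_one, vertexSign]

lemma vertexSign_insert_of_le {u v : V} (s : Finset V) (h : v ≤ u) :
    vertexSign v (insert u s) = vertexSign v s := by
  rw [vertexSign, filter_insert, if_neg h.not_gt, vertexSign]

lemma vertexSign_mul_vertexSign_erase {u v : V} {s : Finset V} (hu : u ∈ s) (hv : v ∈ s)
    (h : u ≠ v) :
    vertexSign v s * vertexSign u (s.erase v) = - (vertexSign u s * vertexSign v (s.erase u)) := by
  wlog huv : u < v generalizing u v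
  · rw [this hv hu h.symm ((not_lt.1 huv).lt_of_ne h.symm), neg_neg]
  have hv' : vertexSign v s = - vertexSign v (s.erase u) := by
    rw [← vertexSign_insert_of_lt (notMem_erase u s) huv, insert_erase hu]
  have hu' : vertexSign u (s.erase v) = vertexSign u s := by
    rw [← vertexSign_insert_of_le _ huv.le, insert_erase hv]
  rw [hv', hu']
  ring

lemma sum_vertexSign_smul_sum_vertexSign_smul {M : Type*} [AddCommGroup M] (s : Finset V)
    (g : V → V → M) (hg : ∀ u v, g u v = g v u) :
    ∑ v ∈ s, vertexSign v s • ∑ u ∈ s.erase v, vertexSign u (s.erase v) • g v u = 0 := by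
  simp_rw [smul_sum, smul_smul, sum_sigma']
  refine sum_involution (fun p _ => ⟨p.2, p.1⟩) ?_ ?_ ?_ fun _ _ => rfl
  all_goals rintro ⟨v, u⟩ hp
  all_goals obtain ⟨hv, huv, hu⟩ : v ∈ s ∧ u ≠ v ∧ u ∈ s := by simpa using hp
  · rw [vertexSign_mul_vertexSign_erase hu hv huv, hg v u, neg_smul, neg_add_cancel]
  · exact fun _ h => huv (congrArg Sigma.fst h)
  · simpa using ⟨hu, huv.symm, hv⟩

end Signs

section Monomials

variable (R : Type*) [CommRing R] {V : Type*} [LinearOrder V]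

variable (V) in
/-- The basis of the exterior algebra given by the finite sets of vertices, a finite set being
oriented by the order on `V`. -/
noncomputable abbrev monomialBasis : Module.Basis (Finset V) R (VertexExterior R V) :=
  Finsupp.basisSingleOne.ExteriorAlgebra

lemma monomialBasis_apply (s : Finset V) : monomialBasis R V s = listProd R s.sort := by
  rw [monomialBasis, ExteriorAlgebra.basis_apply_ofCard _ rfl, ExteriorAlgebra.ιMulti_family,
    ExteriorAlgebra.ιMulti_apply, listProd, ← listMap_orderEmbOfFin_finRange s rfl, List.map_map,
    List.ofFn_eq_map]
  simp [gen, Function.comp_def, Set.powersetCard.ofFinEmbEquiv]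

variable {R}

lemma gen_mul_monomialBasis_of_mem {v : V} {s : Finset V} (h : v ∈ s) :
    gen R v * monomialBasis R V s = 0 := by
  rw [monomialBasis_apply]
  exact gen_mul_listProd_of_mem (by simpa using h)

variable [DecidableEq V]

lemma monomialBasis_insert_of_forall_lt {v : V} {s : Finset V} (h : ∀ x ∈ s, v < x) :
    monomialBasis R V (insert v s) = gen R v * monomialBasis R V s := by
  rw [monomialBasis_apply, monomialBasis_apply, ← listProd_cons,
    sort_insert (r := (· ≤ ·)) (fun x hx => (h x hx).le) fun hv => (h v hv).false]

lemma boundary_monomialBasis (s : Finset V) :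
    boundary R (monomialBasis R V s) =
      ∑ x ∈ s, vertexSign x s • monomialBasis R V (s.erase x) := by
  cases Subsingleton.elim ‹DecidableEq V› LinearOrder.toDecidableEq
  induction s using Finset.induction_on_min with
  | empty => simp [monomialBasis_apply]
  | insert m s h ih =>
    have hm : m ∉ s := fun hm => (h m hm).false
    rw [monomialBasis_insert_of_forall_lt h, boundary_gen_mul, ih, sum_insert hm, erase_insert hm,
      vertexSign_insert_of_le s le_rfl, vertexSign_eq_one_of_forall_lt h, one_smul, sub_eq_add_neg,
      mul_sum, ← sum_neg_distrib]
    congr 1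
    refine sum_congr rfl fun x hx => ?_
    rw [erase_insert_of_ne (h x hx).ne, vertexSign_insert_of_lt hm (h x hx),
      monomialBasis_insert_of_forall_lt fun y hy => h y (mem_of_mem_erase hy), mul_smul_comm,
      neg_smul]

lemma chainSpan_eq_span_monomialBasis (P : Set (Finset V)) (n : ℕ) :
    chainSpan R P n = Submodule.span R (monomialBasis R V '' {s ∈ P | #s = n}) := by
  apply le_antisymm
  · refine chainSpan_le fun l hl hn hP => ?_
    have hperm : l.Perm l.toFinset.sort :=
      (List.perm_ext_iff_of_nodup hl (sort_nodup _ _)).2 fun a => by simp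
    have hmem : listProd R l.toFinset.sort ∈
        Submodule.span R (monomialBasis R V '' {s ∈ P | #s = n}) := by
      rw [← monomialBasis_apply]
      exact Submodule.subset_span ⟨_, ⟨hP, by rw [List.toFinset_card_of_nodup hl, hn]⟩, rfl⟩
    rcases listProd_perm (R := R) hperm with e | e <;> rw [e]
    exacts [hmem, neg_mem hmem]
  · rw [Submodule.span_le]
    rintro _ ⟨s, ⟨hs, rfl⟩, rfl⟩
    rw [monomialBasis_apply]
    refine listProd_mem_chainSpan (length_sort _) ?_
    rwa [sort_toFinset]

end Monomials

end VertexExterior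

section OrderChains

variable {α : Type*} [PartialOrder α]

/-- The finite chains contained in a subset `S` of a poset: the faces of the order complex
of `S`. -/
def orderChains (S : Set α) : Set (Finset α) := {C | ↑C ⊆ S ∧ IsChain (· ≤ ·) (C : Set α)}

lemma orderChains_mono {S T : Set α} (h : S ⊆ T) : orderChains S ⊆ orderChains T :=
  fun _ hC => ⟨hC.1.trans h, hC.2⟩

lemma empty_mem_orderChains (S : Set α) : ∅ ∈ orderChains S := by simp [orderChains]

variable [DecidableEq α] {S : Set α} {a : α}

lemma insert_mem_orderChains {C : Finset α} (ha : a ∈ S) (hC : C ∈ orderChains S)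
    (h : ∀ b ∈ C, a ≤ b ∨ b ≤ a) : insert a C ∈ orderChains S := by
  simp only [orderChains, Set.mem_ofPred_eq, coe_insert, Set.insert_subset_iff]
  exact ⟨⟨ha, hC.1⟩, hC.2.insert fun b hb _ => h b hb⟩

lemma setOf_insert_mem_orderChains (ha : a ∈ S) :
    {C | a ∉ C ∧ insert a C ∈ orderChains S} =
      orderChains {b | b ∈ S ∧ b ≠ a ∧ (a ≤ b ∨ b ≤ a)} := by
  ext C
  constructor
  · rintro ⟨haC, hS, hC⟩
    rw [coe_insert] at hS hC
    refine ⟨fun b hb => ⟨hS (.inr hb), ?_, hC.total (.inl rfl) (.inr hb)⟩,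
      hC.mono (Set.subset_insert _ _)⟩
    rintro rfl
    exact haC hb
  · exact fun hC => ⟨fun haC => (hC.1 haC).2.1 rfl, insert_mem_orderChains ha
      (orderChains_mono (fun b hb => hb.1) hC) fun b hb => (hC.1 hb).2.2⟩

end OrderChains

namespace VertexExterior

section Subdivision

variable (R : Type*) [CommRing R] {V : Type*} [LinearOrder V] [DecidableEq V]

/-- The chain of the barycentric subdivision of the simplex `s`, with each set `t ⊆ s` replaced
by `F ∪ t`: the cone from `F ∪ s` over the subdivided boundary of `s`. -/
noncomputable def subdivision (F s : Finset V) : VertexExterior R (Finset V) :=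
  if s = ∅ then 1
  else gen R (F ∪ s) * ∑ v : s, vertexSign v.1 s • subdivision F (s.erase v)
termination_by #s
decreasing_by exact card_erase_lt_of_mem v.2

/-- Barycentric subdivision as a map of chains. -/
noncomputable def subdivisionMap (F : Finset V) :
    VertexExterior R V →ₗ[R] VertexExterior R (Finset V) :=
  (monomialBasis R V).constr R (subdivision R F)

variable {R}

lemma subdivision_empty (F : Finset V) : subdivision R F ∅ = 1 := by
  rw [subdivision, if_pos rfl]

lemma subdivision_of_nonempty (F : Finset V) {s : Finset V} (hs : s.Nonempty) :
    subdivision R F s =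
      gen R (F ∪ s) * ∑ v ∈ s, vertexSign v s • subdivision R F (s.erase v) := by
  rw [subdivision, if_neg hs.ne_empty, ← sum_coe_sort s]

lemma boundary_subdivision (F s : Finset V) :
    boundary R (subdivision R F s) =
      ∑ v ∈ s, vertexSign v s • subdivision R F (s.erase v) := by
  induction s using Finset.strongInduction with
  | H s ih =>
    rcases s.eq_empty_or_nonempty with rfl | hs
    · simp [subdivision_empty]
    have h0 : ∑ v ∈ s, boundary R (vertexSign v s • subdivision R F (s.erase v)) = 0 := by
      rw [← sum_vertexSign_smul_sum_vertexSign_smul s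
        (fun v u => subdivision R F ((s.erase v).erase u)) fun u v => by rw [erase_right_comm]]
      exact sum_congr rfl fun v hv => by rw [map_zsmul, ih _ (erase_ssubset hv)]
    rw [subdivision_of_nonempty F hs, boundary_gen_mul, map_sum, h0, mul_zero, sub_zero]

lemma boundary_subdivisionMap (F : Finset V) (x : VertexExterior R V) :
    boundary R (subdivisionMap R F x) = subdivisionMap R F (boundary R x) := by
  suffices boundary R ∘ₗ subdivisionMap R F = subdivisionMap R F ∘ₗ boundary R from
    LinearMap.congr_fun this x
  refine (monomialBasis R V).ext fun s => ?_
  simp only [LinearMap.comp_apply, boundary_monomialBasis, map_sum, map_zsmul, subdivisionMap,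
    Module.Basis.constr_basis, boundary_subdivision]

lemma subdivision_mem_chainSpan {F s : Finset V} (h : Disjoint F s) :
    subdivision R F s ∈ chainSpan R (orderChains (Set.Ioc F (F ∪ s))) #s := by
  induction s using Finset.strongInduction with
  | H s ih =>
    rcases s.eq_empty_or_nonempty with rfl | hs
    · rw [subdivision_empty]
      exact listProd_mem_chainSpan (l := []) rfl (empty_mem_orderChains _)
    have hF : F < F ∪ s := left_lt_sup.2 fun hsF => hs.ne_empty (h.symm.eq_bot_of_le hsF)
    rw [subdivision_of_nonempty F hs, ← Nat.sub_add_cancel hs.card_pos]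
    refine gen_mul_mem_chainSpan (P := orderChains (Set.Ioc F (F ∪ s))) (fun C hC => ?_)
      (sum_mem fun v hv => zsmul_mem ?_ _)
    · exact insert_mem_orderChains ⟨hF, le_rfl⟩ hC fun b hb => .inr (hC.1 hb).2
    · rw [← card_erase_of_mem hv]
      exact chainSpan_mono
        (orderChains_mono (Set.Ioc_subset_Ioc_right (union_subset_union_right (erase_subset v s))))
        _ (ih _ (erase_ssubset hv) (h.mono_right (erase_subset _ _)))

lemma mapVertices_subdivision {F s : Finset V} (h : Disjoint F s) {f : Finset V → V}
    (hf : ∀ t, F < t → f t ∈ t \ F) :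
    mapVertices f (subdivision R F s) = monomialBasis R V s := by
  induction s using Finset.strongInduction with
  | H s ih =>
    rcases s.eq_empty_or_nonempty with rfl | hs
    · simp [subdivision_empty, monomialBasis_apply]
    have hm : f (F ∪ s) ∈ s := by
      have hFs := hf (F ∪ s) (left_lt_sup.2 fun hsF => hs.ne_empty (h.symm.eq_bot_of_le hsF))
      rwa [union_sdiff_cancel_left h] at hFs
    have hsum : ∀ v ∈ s, mapVertices f (vertexSign v s • subdivision R F (s.erase v)) =
        vertexSign v s • monomialBasis R V (s.erase v) := fun v hv => by
      rw [map_zsmul, ih _ (erase_ssubset hv) (h.mono_right (erase_subset _ _))]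
    rw [subdivision_of_nonempty F hs, map_mul, mapVertices_gen, map_sum, sum_congr rfl hsum,
      ← boundary_monomialBasis, ← sub_eq_zero, ← neg_sub, ← boundary_gen_mul,
      gen_mul_monomialBasis_of_mem hm, map_zero, neg_zero]

end Subdivision

end VertexExterior

namespace SComplex

open VertexExterior

section Bridge

variable (k : Type) [Field k] {V : Type} [DecidableEq V] [Fintype V]

/-- The simplicial chains of `K` as elements of the exterior algebra. -/
noncomputable def toExterior (K : SComplex V) (n : ℕ) : ChainsOf k K n →ₗ[k] VertexExterior k V :=
  letI := arbOrder V
  Finsupp.linearCombination k fun s : Faces K n => monomialBasis k V s.1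

lemma toExterior_injective (K : SComplex V) (n : ℕ) : Function.Injective (toExterior k K n) :=
  letI := arbOrder V
  (monomialBasis k V).linearIndependent.comp (fun s : Faces K n => s.1) Subtype.val_injective

lemma range_toExterior (K : SComplex V) (n : ℕ) :
    LinearMap.range (toExterior k K n) = chainSpan k (K.faces : Set (Finset V)) n := by
  let _ := arbOrder V
  rw [toExterior, Finsupp.range_linearCombination, chainSpan_eq_span_monomialBasis,
    Set.image_eq_range]
  rfl

lemma toExterior_bd (K : SComplex V) (n : ℕ) (c : ChainsOf k K n) :
    toExterior k K (n - 1) (bd k K n c) = boundary k (toExterior k K n c) := by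
  let _ := arbOrder V
  suffices toExterior k K (n - 1) ∘ₗ bd k K n = boundary k ∘ₗ toExterior k K n from
    LinearMap.congr_fun this c
  refine Finsupp.lhom_ext' fun s => LinearMap.ext_ring ?_
  simp only [LinearMap.comp_apply, Finsupp.lsingle_apply, toExterior,
    Finsupp.linearCombination_single, one_smul, boundary_monomialBasis, bd, Finsupp.lsum_single,
    LinearMap.toSpanSingleton_apply]
  rw [← sum_attach s.1]
  refine (map_sum (toExterior k K (n - 1)) _ _).trans (sum_congr rfl fun x _ => ?_)
  refine (map_smul (toExterior k K (n - 1)) _ _).trans ?_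
  rw [vertexSign, ← Int.cast_smul_eq_zsmul k, Int.cast_pow, Int.cast_neg, Int.cast_one]
  exact congrArg _ ((Finsupp.linearCombination_single k 1 _).trans (one_smul k _))

lemma hVanish_iff_acyclic (K : SComplex V) (i : ℕ) :
    HVanish k K i ↔ Acyclic k (K.faces : Set (Finset V)) i := by
  simp only [Acyclic, ← range_toExterior]
  constructor
  · rintro h _ ⟨c, rfl⟩ hc
    rw [← toExterior_bd, ← map_zero (toExterior k K (i - 1))] at hc
    obtain ⟨b, rfl⟩ := h (toExterior_injective k K _ hc)
    exact ⟨_, ⟨b, rfl⟩, (toExterior_bd k K (i + 1) b).symm⟩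
  · intro h c hc
    obtain ⟨_, ⟨b, rfl⟩, hb⟩ := h _ ⟨c, rfl⟩
      (by rw [← toExterior_bd, LinearMap.mem_ker.1 hc, map_zero])
    exact ⟨b, toExterior_injective k K i ((toExterior_bd k K (i + 1) b).trans hb)⟩

end Bridge

section Links

/-- The faces of the link of `F` that avoid `N`. For `F ∈ K` this is the link of `F` in the induced
subcomplex on the complement of `N \ F`; otherwise it is empty. -/
def linkAvoiding {V : Type} [DecidableEq V] (K : SComplex V) (F N : Finset V) : Set (Finset V) :=
  {s | Disjoint F s ∧ Disjoint N s ∧ F ∪ s ∈ K.faces}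

/-- The links of the induced subcomplexes of `K` have vanishing reduced homology, in the range of
degrees given by `D` and `ℓ`. -/
def HasAcyclicLinks (R : Type*) [CommRing R] {V : Type} [DecidableEq V] (K : SComplex V)
    (D ℓ : ℕ) : Prop :=
  ∀ (F N : Finset V) (i : ℕ), i + #F + #N < D → i < ℓ → Acyclic R (K.linkAvoiding F N) i

variable {R : Type*} [CommRing R] {V : Type} [DecidableEq V] {K : SComplex V}

lemma coe_faces_trunc (K : SComplex V) (j : ℕ) :
    ((K.trunc j).faces : Set (Finset (Finset V))) = orderChains {s | s ∈ K.faces ∧ j < #s} := by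
  ext C
  simp only [trunc, coe_filter, mem_powerset, Set.mem_ofPred_eq, orderChains]
  constructor
  · rintro ⟨hK, hj, hC⟩
    exact ⟨fun s hs => ⟨hK hs, hj s hs⟩, fun s hs t ht _ => hC s hs t ht⟩
  · rintro ⟨hK, hC⟩
    exact ⟨fun s hs => (hK hs).1, fun s hs => (hK hs).2, fun s hs t ht => hC.total hs ht⟩

lemma acyclic_orderChains_ssuperset_of_trunc {F : Finset V} {i j : ℕ} (hF : F ∈ K.faces)
    (hj : #F = j + 1)
    (h₁ : Acyclic R ((K.trunc (j + 1)).faces : Set (Finset (Finset V))) i)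
    (h₂ : Acyclic R ((K.trunc j).faces : Set (Finset (Finset V))) (i + 1)) :
    Acyclic R (orderChains {s | s ∈ K.faces ∧ F ⊂ s}) i := by
  rw [coe_faces_trunc] at h₁ h₂
  have hstar : {s | s ∈ {s | s ∈ K.faces ∧ j < #s} ∧ s ≠ F ∧ (F ≤ s ∨ s ≤ F)} =
      {s | s ∈ K.faces ∧ F ⊂ s} := by
    ext s
    constructor
    · rintro ⟨⟨hs, hjs⟩, hne, hFs | hsF⟩
      · exact ⟨hs, hFs.lt_of_ne hne.symm⟩
      · exact (hne (eq_of_subset_of_card_le hsF (by omega))).elim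
    · rintro ⟨hs, hFs⟩
      exact ⟨⟨hs, by have := card_lt_card hFs; omega⟩, hFs.ne', .inl hFs.le⟩
  have hFj : F ∈ {s | s ∈ K.faces ∧ j < #s} := ⟨hF, by omega⟩
  rw [← hstar, ← setOf_insert_mem_orderChains hFj]
  refine Acyclic.link F (orderChains_mono fun s hs => ⟨hs.1, Nat.lt_of_succ_lt hs.2⟩) ?_ ?_ h₁ h₂
  · intro C hC hFC
    have := (hC.1 hFC).2
    omega
  · rw [setOf_insert_mem_orderChains hFj, hstar]
    exact orderChains_mono fun s hs => ⟨hs.1, hj ▸ card_lt_card hs.2⟩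

lemma image_mem_linkAvoiding {F : Finset V} (hF : F ∈ K.faces) {f : Finset V → V}
    (hf : ∀ t, F < t → f t ∈ t \ F) {C : Finset (Finset V)}
    (hC : C ∈ orderChains {s | s ∈ K.faces ∧ F ⊂ s}) : C.image f ∈ K.linkAvoiding F ∅ := by
  obtain ⟨hCF, hC⟩ := hC
  have hfC : ∀ t ∈ C, f t ∈ t \ F := fun t ht => hf t (hCF ht).2
  refine ⟨?_, disjoint_empty_left _, ?_⟩
  · simpa [disjoint_right] using fun t ht => (mem_sdiff.1 (hfC t ht)).2
  rcases C.eq_empty_or_nonempty with rfl | hne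
  · simpa using hF
  obtain ⟨t, ht, hmax⟩ := C.exists_maximal hne
  refine K.down_closed (hCF ht).1 (union_subset (hCF ht).2.subset (image_subset_iff.2 ?_))
  intro u hu
  have hut : u ≤ t := (hC.total hu ht).elim id fun htu => hmax hu htu
  exact hut (mem_sdiff.1 (hfC u hu)).1

/-- Barycentric subdivision maps chains of the link of `F` to order chains above `F`; sending each
face `t ⊃ F` to a vertex of `t \ F` is a left inverse. -/
lemma acyclic_linkAvoiding_empty [Nonempty V] {F : Finset V} (hF : F ∈ K.faces) {i : ℕ}
    (h : Acyclic R (orderChains {s | s ∈ K.faces ∧ F ⊂ s}) i) :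
    Acyclic R (K.linkAvoiding F ∅) i := by
  obtain ⟨_, _⟩ := exists_wellFoundedLT V
  have hex : ∀ t : Finset V, ∃ v : V, F < t → v ∈ t \ F := fun t => by
    by_cases ht : F < t
    · obtain ⟨v, hv, hvF⟩ := exists_of_ssubset ht
      exact ⟨v, fun _ => mem_sdiff.2 ⟨hv, hvF⟩⟩
    · exact ⟨Classical.arbitrary V, fun h => (ht h).elim⟩
  choose f hf using hex
  have hbasis : ∀ {S : Submodule R (VertexExterior R V)},
      (∀ s ∈ K.linkAvoiding F ∅, #s = i → monomialBasis R V s ∈ S) →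
      chainSpan R (K.linkAvoiding F ∅) i ≤ S := fun {S} hS => by
    rw [chainSpan_eq_span_monomialBasis, Submodule.span_le, Set.image_subset_iff]
    exact fun s hs => hS s hs.1 hs.2
  refine h.of_retract (subdivisionMap R F) f (boundary_subdivisionMap F) (fun x hx => ?_)
    (fun C hC => image_mem_linkAvoiding hF hf hC) (fun x hx => ?_)
  · refine hbasis (S := (chainSpan R _ i).comap (subdivisionMap R F)) (fun s hs hsi => ?_) hx
    rw [Submodule.mem_comap, subdivisionMap, Module.Basis.constr_basis, ← hsi]
    refine chainSpan_mono (orderChains_mono fun t ht => ?_) _ (subdivision_mem_chainSpan hs.1)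
    exact ⟨K.down_closed hs.2.2 ht.2, ht.1⟩
  · refine hbasis (S := LinearMap.eqLocus ((mapVertices f).toLinearMap ∘ₗ subdivisionMap R F)
      LinearMap.id) (fun s hs _ => ?_) hx
    simp only [LinearMap.mem_eqLocus, LinearMap.comp_apply, subdivisionMap,
      Module.Basis.constr_basis, AlgHom.toLinearMap_apply, LinearMap.id_apply]
    exact mapVertices_subdivision hs.1 hf

lemma linkAvoiding_eq_empty {F : Finset V} (hF : F ∉ K.faces) (N : Finset V) :
    K.linkAvoiding F N = ∅ :=
  Set.eq_empty_of_forall_notMem fun _ hs => hF (K.down_closed hs.2.2 subset_union_left)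

lemma isLowerSet_linkAvoiding (F N : Finset V) : IsLowerSet (K.linkAvoiding F N) :=
  fun _ _ hts ⟨hF, hN, hK⟩ =>
    ⟨hF.mono_right hts, hN.mono_right hts, K.down_closed hK (union_subset_union_right hts)⟩

lemma linkAvoiding_insert_of_mem {F : Finset V} {v : V} (hv : v ∈ F) (N : Finset V) :
    K.linkAvoiding F (insert v N) = K.linkAvoiding F N := by
  ext s
  simp only [linkAvoiding, Set.mem_ofPred_eq, disjoint_insert_left]
  exact ⟨fun h => ⟨h.1, h.2.1.2, h.2.2⟩,
    fun h => ⟨h.1, ⟨disjoint_left.1 h.1 hv, h.2.1⟩, h.2.2⟩⟩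

lemma linkAvoiding_insert_right (F N : Finset V) (v : V) :
    K.linkAvoiding F (insert v N) = {s | s ∈ K.linkAvoiding F N ∧ v ∉ s} := by
  ext s
  simp only [linkAvoiding, Set.mem_ofPred_eq, disjoint_insert_left]
  tauto

lemma linkAvoiding_insert_left {F N : Finset V} {v : V} (hF : v ∉ F) (hN : v ∉ N) :
    K.linkAvoiding (insert v F) N = {s | v ∉ s ∧ insert v s ∈ K.linkAvoiding F N} := by
  ext s
  simp only [linkAvoiding, Set.mem_ofPred_eq, disjoint_insert_left, disjoint_insert_right,
    insert_union, union_insert]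
  tauto

lemma linkAvoiding_link {F N : Finset V} {v : V} (hv : v ∉ F) :
    (K.link {v}).linkAvoiding F N = K.linkAvoiding (insert v F) N := by
  ext s
  simp only [linkAvoiding, link, Set.mem_ofPred_eq, mem_filter, disjoint_insert_left,
    disjoint_singleton_left, mem_union, singleton_union, insert_union, not_or]
  constructor
  · rintro ⟨hF, hN, -, ⟨-, hvs⟩, hK⟩
    exact ⟨⟨hvs, hF⟩, hN, hK⟩
  · rintro ⟨⟨hvs, hF⟩, hN, hK⟩
    exact ⟨hF, hN, K.down_closed hK (subset_insert _ _), ⟨hv, hvs⟩, hK⟩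

lemma HasAcyclicLinks.link {D ℓ : ℕ} (h : HasAcyclicLinks R K D ℓ) (v : V) :
    HasAcyclicLinks R (K.link {v}) (D - 1) ℓ := by
  intro F N i hi hil
  by_cases hv : v ∈ F
  · rw [linkAvoiding_eq_empty (by simp [SComplex.link, hv])]
    exact acyclic_empty i
  · rw [linkAvoiding_link hv]
    exact h (insert v F) N i (by rw [card_insert_of_notMem hv]; omega) hil

lemma rank_eq_zero_of_isEmpty [IsEmpty V] (K : SComplex V) : K.rank = 0 :=
  Nat.le_zero.1 (Finset.sup_le fun s _ => by rw [eq_empty_of_isEmpty s, card_empty])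

lemma acyclic_linkAvoiding_empty_of_trunc {ℓ : ℕ}
    (h : ∀ i j : ℕ, i + j < K.rank → i ≤ ℓ →
      Acyclic R ((K.trunc j).faces : Set (Finset (Finset V))) i)
    {F : Finset V} {i : ℕ} (hi : i + #F < K.rank) (hil : i < ℓ) :
    Acyclic R (K.linkAvoiding F ∅) i := by
  by_cases hF : F ∈ K.faces
  swap
  · rw [linkAvoiding_eq_empty hF]
    exact acyclic_empty i
  have : Nonempty V := not_isEmpty_iff.1 fun _ => by
    have := K.rank_eq_zero_of_isEmpty
    omega
  refine acyclic_linkAvoiding_empty hF ?_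
  rcases hj : #F with _ | j
  · obtain rfl := card_eq_zero.1 hj
    simpa only [coe_faces_trunc, empty_ssubset, card_pos] using h i 0 (by omega) hil.le
  · exact acyclic_orderChains_ssuperset_of_trunc hF hj (h i (j + 1) (by omega) hil.le)
      (h (i + 1) j (by omega) hil)

lemma hasAcyclicLinks_of_trunc {ℓ : ℕ}
    (h : ∀ i j : ℕ, i + j < K.rank → i ≤ ℓ →
      Acyclic R ((K.trunc j).faces : Set (Finset (Finset V))) i) :
    HasAcyclicLinks R K K.rank ℓ := by
  intro F N
  induction N using Finset.induction generalizing F with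
  | empty => exact fun i hi hil => acyclic_linkAvoiding_empty_of_trunc h hi hil
  | insert v N hv ih =>
    intro i hi hil
    rw [card_insert_of_notMem hv] at hi
    by_cases hvF : v ∈ F
    · rw [linkAvoiding_insert_of_mem hvF]
      exact ih F i (by omega) hil
    · rw [linkAvoiding_insert_right]
      refine Acyclic.deletion v (isLowerSet_linkAvoiding F N) (ih F i (by omega) hil) ?_
      rw [← linkAvoiding_insert_left hvF hv]
      exact ih _ i (by rw [card_insert_of_notMem hvF]; omega) hil

end Links

end SComplex

namespace VertexExterior

section Cohomology

variable {k V : Type*} [Field k] [LinearOrder V] [DecidableEq V] {Q : Set (Finset V)} {i : ℕ}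

/-- Over a field, a functional on chains that vanishes on the kernel of the boundary map factors
through it. -/
lemma Acyclic.exists_coboundary (h : Acyclic k Q i) {φ : Finset V → k}
    (hφ : ∀ G ∈ Q, #G = i + 1 → ∑ v ∈ G, vertexSign v G • φ (G.erase v) = 0) :
    ∃ ψ : Finset V → k, ∀ F ∈ Q, #F = i → φ F = ∑ v ∈ F, vertexSign v F • ψ (F.erase v) := by
  let Φ : VertexExterior k V →ₗ[k] k := (monomialBasis k V).constr k φ
  have hΦ : ∀ s, Φ (monomialBasis k V s) = φ s := (monomialBasis k V).constr_basis k φ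
  have hbd : chainSpan k Q (i + 1) ≤ LinearMap.ker (Φ ∘ₗ boundary k) := by
    rw [chainSpan_eq_span_monomialBasis, Submodule.span_le, Set.image_subset_iff]
    rintro G ⟨hG, hGi⟩
    refine LinearMap.mem_ker.2 ?_
    rw [LinearMap.comp_apply, boundary_monomialBasis, map_sum]
    simpa only [map_zsmul, hΦ] using hφ G hG hGi
  have hmem : Φ.domRestrict (chainSpan k Q i) ∈
      LinearMap.range ((boundary k).domRestrict (chainSpan k Q i)).dualMap := by
    rw [LinearMap.range_dualMap_eq_dualAnnihilator_ker, Submodule.mem_dualAnnihilator]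
    rintro ⟨z, hz⟩ hbz
    obtain ⟨w, hw, rfl⟩ := h z hz hbz
    exact hbd hw
  obtain ⟨Ψ, hΨ⟩ := hmem
  refine ⟨fun s => Ψ (monomialBasis k V s), fun F hF hFi => ?_⟩
  have hF' : monomialBasis k V F ∈ chainSpan k Q i := by
    rw [chainSpan_eq_span_monomialBasis]
    exact Submodule.subset_span ⟨F, ⟨hF, hFi⟩, rfl⟩
  have hΨF := LinearMap.congr_fun hΨ ⟨_, hF'⟩
  simp only [LinearMap.dualMap_apply, LinearMap.domRestrict_apply, hΦ, boundary_monomialBasis,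
    map_sum, map_zsmul] at hΨF
  exact hΨF.symm

lemma prod_vertexSign_mul_vertexSign_union {N s : Finset V} {v : V} (h : Disjoint N s)
    (hv : v ∈ s) :
    (∏ u ∈ s, vertexSign u N) * vertexSign v (N ∪ s) =
      vertexSign v s * ∏ u ∈ s.erase v, vertexSign u N := by
  have hunion : vertexSign v (N ∪ s) = vertexSign v N * vertexSign v s := by
    rw [vertexSign, vertexSign, vertexSign, ← pow_add, filter_union,
      card_union_of_disjoint (disjoint_filter_filter h)]
  rw [hunion, ← mul_prod_erase s _ hv]
  linear_combination (vertexSign v s * ∏ u ∈ s.erase v, vertexSign u N) * vertexSign_mul_self v N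

/-- Rescaling the cochain value at `N ∪ s` by `∏ u ∈ s, vertexSign u N` turns the coboundary that
adds vertices to `N ∪ s` into the one that adds them to `s`. -/
lemma Acyclic.exists_coboundary_sdiff {N : Finset V} (h : Acyclic k Q i)
    (hQ : ∀ s ∈ Q, Disjoint N s) {φ : Finset V → k}
    (hφ : ∀ G, N ⊆ G → #G = #N + i + 1 → G \ N ∈ Q →
      ∑ v ∈ G \ N, vertexSign v G • φ (G.erase v) = 0) :
    ∃ ψ : Finset V → k, ∀ F, N ⊆ F → #F = #N + i → F \ N ∈ Q →
      φ F = ∑ v ∈ F \ N, vertexSign v F • ψ (F.erase v) := by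
  let ε : Finset V → ℤ := fun s => ∏ u ∈ s, vertexSign u N
  have hε : ∀ s, ε s * ε s = 1 := fun s => by
    rw [← prod_mul_distrib]
    exact prod_eq_one fun u _ => vertexSign_mul_self u N
  have htwist : ∀ (f : Finset V → k) (s : Finset V), Disjoint N s →
      ε s • ∑ v ∈ s, vertexSign v (N ∪ s) • f ((N ∪ s).erase v) =
        ∑ v ∈ s, vertexSign v s • ε (s.erase v) • f (N ∪ s.erase v) := by
    intro f s hs
    rw [smul_sum]
    refine sum_congr rfl fun v hv => ?_
    rw [erase_union_distrib, erase_eq_of_notMem (disjoint_right.1 hs hv), smul_smul, smul_smul,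
      prod_vertexSign_mul_vertexSign_union hs hv]
  obtain ⟨ψ, hψ⟩ := h.exists_coboundary (φ := fun s => ε s • φ (N ∪ s)) fun s hs hsi => by
    have hsdiff : (N ∪ s) \ N = s := union_sdiff_cancel_left (hQ s hs)
    have hcocycle := hφ (N ∪ s) subset_union_left
      (by rw [card_union_of_disjoint (hQ s hs), hsi, add_assoc]) (hsdiff.symm ▸ hs)
    rw [hsdiff] at hcocycle
    rw [← htwist φ s (hQ s hs), hcocycle, smul_zero]
  refine ⟨fun F => ε (F \ N) • ψ (F \ N), fun F hNF hF hFQ => ?_⟩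
  have hsdiff : ∀ v, (N ∪ (F \ N).erase v) \ N = (F \ N).erase v := fun v =>
    union_sdiff_cancel_left (disjoint_sdiff.mono_right (erase_subset _ _))
  have hF' := htwist (fun F => ε (F \ N) • ψ (F \ N)) (F \ N) disjoint_sdiff
  simp only [hsdiff, smul_smul (ε _) (ε _), hε, one_smul, union_sdiff_of_subset hNF] at hF'
  have hφF := hψ (F \ N) hFQ (by rw [card_sdiff_of_subset hNF, hF, Nat.add_sub_cancel_left])
  rw [← hF', union_sdiff_of_subset hNF] at hφF
  simpa only [smul_smul, hε, one_smul] using congrArg (ε (F \ N) • ·) hφF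

end Cohomology

end VertexExterior

section Koszul

open VertexExterior

variable {V : Type*} [LinearOrder V] [DecidableEq V] {R M : Type*} [CommRing R] [AddCommGroup M]
  [Module R M]

/-- The differential of the Koszul cochain complex of the family `x` with coefficients in `M`. A
cochain of degree `j` is a function on the subsets of `V` of cardinality `j`; its values on other
subsets are irrelevant. -/
def koszul (x : V → R) : (Finset V → M) →ₗ[R] (Finset V → M) where
  toFun c F := ∑ v ∈ F, vertexSign v F • x v • c (F.erase v)
  map_add' b c := by
    ext F
    simp only [Pi.add_apply, smul_add, sum_add_distrib]
  map_smul' a c := by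
    ext F
    simp only [Pi.smul_apply, smul_sum, smul_comm a, RingHom.id_apply]

variable (M) in
/-- Exactness of the Koszul cochain complex of `x` in degrees less than `n`. -/
def KoszulExact (x : V → R) (n : ℕ) : Prop :=
  ∀ j < n, ∀ c : Finset V → M, (∀ F, #F = j + 1 → koszul x c F = 0) →
    ∃ b : Finset V → M, ∀ F, #F = j → c F = koszul x b F

lemma koszul_apply (x : V → R) (c : Finset V → M) (F : Finset V) :
    koszul x c F = ∑ v ∈ F, vertexSign v F • x v • c (F.erase v) := rfl

lemma koszul_koszul (x : V → R) (c : Finset V → M) : koszul x (koszul x c) = 0 := by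
  ext G
  refine Eq.trans ?_ (sum_vertexSign_smul_sum_vertexSign_smul G
    (fun v u => x v • x u • c ((G.erase v).erase u)) fun u v => by
      rw [erase_right_comm, smul_comm])
  simp only [koszul_apply, smul_sum, smul_comm (x _) (vertexSign _ _)]

lemma koszul_comp {N : Type*} [AddCommGroup N] [Module R N] (x : V → R) (g : M →ₗ[R] N)
    (c : Finset V → M) (F : Finset V) : koszul x (g ∘ c) F = g (koszul x c F) := by
  simp only [koszul_apply, map_sum, map_zsmul, map_smul, Function.comp_apply]

lemma koszul_congr {x : V → R} {b c : Finset V → M} {F : Finset V} {j : ℕ} (hF : #F = j + 1)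
    (h : ∀ E, #E = j → b E = c E) : koszul x b F = koszul x c F :=
  sum_congr rfl fun v hv => by
    rw [h _ (by rw [card_erase_of_mem hv, hF, Nat.add_sub_cancel])]

end Koszul

section KoszulRegular

open scoped Pointwise
open RingTheory.Sequence

variable {V : Type*} [LinearOrder V] [DecidableEq V] {R M : Type*} [CommRing R] [AddCommGroup M]
  [Module R M] {x : V → R} {n : ℕ}

lemma KoszulExact.quotSMulTop (h : KoszulExact M x (n + 1)) {a : R} (ha : IsSMulRegular M a) :
    KoszulExact (QuotSMulTop a M) x n := by
  intro j hj c hc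
  let π : M →ₗ[R] QuotSMulTop a M := Submodule.mkQ _
  have hπ : ∀ m, π m = 0 ↔ ∃ e, a • e = m := fun m => by
    rw [Submodule.mkQ_apply, Submodule.Quotient.mk_eq_zero,
      Submodule.mem_smul_pointwise_iff_exists]
    simp only [Submodule.mem_top, true_and]
  choose f hf using fun F => Submodule.mkQ_surjective _ (c F)
  obtain rfl : π ∘ f = c := funext hf
  have hlift : ∀ F, ∃ e : M, #F = j + 1 → a • e = koszul x f F := fun F => by
    by_cases hF : #F = j + 1
    · obtain ⟨e, he⟩ := (hπ _).1 ((koszul_comp x π f F).symm.trans (hc F hF))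
      exact ⟨e, fun _ => he⟩
    · exact ⟨0, fun h => (hF h).elim⟩
  choose e he using hlift
  obtain ⟨g, hg⟩ := h (j + 1) (by omega) e fun G hG => by
    refine ha.right_eq_zero_of_smul ?_
    have hae : koszul x (a • e) G = koszul x (koszul x f) G := koszul_congr hG he
    rw [← Pi.smul_apply, ← map_smul, hae, koszul_koszul, Pi.zero_apply]
  obtain ⟨b, hb⟩ := h j (by omega) (f - a • g) fun F hF => by
    rw [map_sub, map_smul, Pi.sub_apply, Pi.smul_apply, ← he F hF, hg F hF, sub_self]
  refine ⟨π ∘ b, fun F hF => ?_⟩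
  rw [koszul_comp, ← hb F hF, ← sub_eq_zero, Function.comp_apply, ← map_sub, hπ]
  exact ⟨g F, (sub_sub_cancel (f F) _).symm⟩

/-- Exactness in degree `0` says that no nonzero element of `M` is killed by all `x v`. -/
lemma KoszulExact.exists_isSMulRegular [IsNoetherianRing R] [Module.Finite R M]
    (h : KoszulExact M x n) (hn : 0 < n) : ∃ a ∈ Ideal.span (Set.range x), IsSMulRegular M a := by
  rw [← Ideal.annihilator_quotient (I := Ideal.span (Set.range x)),
    ← IsSMulRegular.subsingleton_linearMap_iff]
  refine subsingleton_of_forall_eq 0 fun f => Submodule.linearMap_qext _ (LinearMap.ext_ring ?_)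
  let g : R →ₗ[R] M := f ∘ₗ (Ideal.span (Set.range x)).mkQ
  have hg : ∀ v, x v • g 1 = 0 := fun v => by
    rw [← map_smul, smul_eq_mul, mul_one, LinearMap.comp_apply, Submodule.mkQ_apply,
      (Submodule.Quotient.mk_eq_zero _).2 (Ideal.subset_span (Set.mem_range_self v)), map_zero]
  obtain ⟨_, hb⟩ := h 0 hn (fun _ => g 1) fun F hF => by
    obtain ⟨v, rfl⟩ := card_eq_one.1 hF
    rw [koszul_apply, sum_singleton, hg, smul_zero]
  exact hb ∅ rfl

lemma KoszulExact.exists_isWeaklyRegular [IsNoetherianRing R] [Module.Finite R M]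
    (h : KoszulExact M x n) :
    ∃ rs : List R, rs.length = n ∧ (∀ r ∈ rs, r ∈ Ideal.span (Set.range x)) ∧
      IsWeaklyRegular M rs := by
  induction n generalizing M with
  | zero => exact ⟨[], rfl, by simp, .nil R M⟩
  | succ n ih =>
    obtain ⟨a, ha, hreg⟩ := h.exists_isSMulRegular n.succ_pos
    obtain ⟨rs, hlen, hmem, hrs⟩ := ih (h.quotSMulTop hreg)
    exact ⟨a :: rs, by rw [List.length_cons, hlen], List.forall_mem_cons.2 ⟨ha, hmem⟩,
      (isWeaklyRegular_cons_iff M a rs).2 ⟨hreg, hrs⟩⟩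

end KoszulRegular

section SquarefreeMonomials

open MvPolynomial

variable {V : Type*}

/-- The exponent of the squarefree monomial `∏ v ∈ s, X v`. -/
noncomputable def squarefreeExponent (s : Finset V) : V →₀ ℕ := ∑ v ∈ s, Finsupp.single v 1

lemma prod_X_eq_monomial {R : Type*} [CommSemiring R] (s : Finset V) :
    ∏ v ∈ s, (X v : MvPolynomial V R) = monomial (squarefreeExponent s) 1 :=
  (monomial_sum_one s _).symm

lemma squarefreeExponent_apply [DecidableEq V] (s : Finset V) (v : V) :
    squarefreeExponent s v = if v ∈ s then 1 else 0 := by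
  simp [squarefreeExponent, Finsupp.single_apply]

lemma squarefreeExponent_le_iff {s : Finset V} {m : V →₀ ℕ} :
    squarefreeExponent s ≤ m ↔ s ⊆ m.support := by
  classical
  simp only [Finsupp.le_def, squarefreeExponent_apply, subset_iff, Finsupp.mem_support_iff]
  refine forall_congr' fun v => ?_
  split_ifs with hv <;> simp [hv, Nat.one_le_iff_ne_zero]

lemma SComplex.mem_srIdeal_iff {V : Type} [DecidableEq V] {k : Type} [Field k] {K : SComplex V}
    {f : MvPolynomial V k} :
    f ∈ srIdeal k K ↔ ∀ m : V →₀ ℕ, m.support ∈ K.faces → f.coeff m = 0 := by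
  have hspan : srIdeal k K = Ideal.span
      ((fun m => monomial m (1 : k)) '' (squarefreeExponent '' {s : Finset V | s ∉ K.faces})) := by
    simp only [srIdeal, Set.image_image, prod_X_eq_monomial]
  rw [hspan, mem_ideal_span_monomial_image]
  constructor
  · intro h m hm
    by_contra hf
    obtain ⟨_, ⟨s, hs, rfl⟩, hle⟩ := h m (mem_support_iff.2 hf)
    exact hs (K.down_closed hm (squarefreeExponent_le_iff.1 hle))
  · intro h m hm
    exact ⟨_, ⟨m.support, fun hs => mem_support_iff.1 hm (h m hs), rfl⟩,
      squarefreeExponent_le_iff.2 subset_rfl⟩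

end SquarefreeMonomials

section Multidegrees

open MvPolynomial VertexExterior

variable {V : Type*} [Fintype V] [DecidableEq V] {F : Finset V} {a m : V →₀ ℕ}

lemma compl_support_subset_of_add_eq (h : squarefreeExponent Fᶜ + m = a) : a.supportᶜ ⊆ F := by
  intro v hv
  by_contra hvF
  simp [← h, squarefreeExponent_apply, hvF] at hv

lemma support_eq_of_add_eq (h : squarefreeExponent Fᶜ + m = a) :
    m.support = ({v | 2 ≤ a v} : Finset V) ∪ F \ a.supportᶜ := by
  ext v
  by_cases hv : v ∈ F <;> simp [← h, squarefreeExponent_apply, hv] <;> omega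

variable [LinearOrder V] {R : Type*} [CommRing R]

/-- Multiplying the value at `F` by the variables outside `F` removes the variables from the Koszul
differential, so that it preserves multidegrees. -/
lemma prod_X_mul_koszul (g : Finset V → MvPolynomial V R) (F : Finset V) :
    (∏ u ∈ Fᶜ, (X u : MvPolynomial V R)) * koszul (X : V → MvPolynomial V R) g F =
      ∑ v ∈ F, vertexSign v F • ((∏ u ∈ (F.erase v)ᶜ, X u) * g (F.erase v)) := by
  rw [koszul_apply, mul_sum]
  refine sum_congr rfl fun v hv => ?_
  rw [compl_erase, prod_insert (notMem_compl.2 hv), mul_smul_comm, smul_eq_mul, mul_left_comm,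
    mul_assoc]

lemma coeff_koszul (g : Finset V → MvPolynomial V R) (h : squarefreeExponent Fᶜ + m = a) :
    coeff m (koszul (X : V → MvPolynomial V R) g F) =
      ∑ v ∈ F \ a.supportᶜ,
        vertexSign v F • coeff a ((∏ u ∈ (F.erase v)ᶜ, X u) * g (F.erase v)) := by
  rw [← one_mul (coeff m _), ← coeff_monomial_mul, h, ← prod_X_eq_monomial, prod_X_mul_koszul,
    coeff_sum]
  simp only [← lcoeff_apply (R := R), map_zsmul]
  refine (sum_subset sdiff_subset fun v hv hva => ?_).symm
  have hle : ¬ squarefreeExponent (F.erase v)ᶜ ≤ a := fun hle => by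
    have hv' := squarefreeExponent_le_iff.1 hle (mem_compl.2 (notMem_erase v F))
    exact hva (mem_sdiff.2 ⟨hv, notMem_compl.2 hv'⟩)
  rw [lcoeff_apply, prod_X_eq_monomial, coeff_monomial_mul', if_neg hle, smul_zero]

end Multidegrees

namespace SComplex

open MvPolynomial VertexExterior

variable {V : Type} [DecidableEq V]

/-- If `P` is nonempty, the family is a cone over any of its elements. -/
lemma HasAcyclicLinks.acyclic_union {R : Type*} [CommRing R] {K : SComplex V} {D ℓ i : ℕ}
    (h : HasAcyclicLinks R K D ℓ) {N P : Finset V} (hNP : Disjoint N P) (hD : i + #N < D)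
    (hl : i < ℓ) : Acyclic R {s | Disjoint N s ∧ P ∪ s ∈ K.faces} i := by
  rcases P.eq_empty_or_nonempty with rfl | ⟨p, hp⟩
  · simpa [linkAvoiding] using h ∅ N i (by simpa using hD) hl
  · refine Acyclic.of_cone p ?_ i
    rintro s ⟨hNs, hs⟩
    refine ⟨disjoint_insert_right.2 ⟨disjoint_right.1 hNP hp, hNs⟩, ?_⟩
    rwa [union_insert, insert_eq_of_mem (mem_union_left _ hp)]

variable [LinearOrder V] {k : Type} [Field k] {K : SComplex V} {D ℓ j : ℕ}

lemma HasAcyclicLinks.exists_coboundary (h : HasAcyclicLinks k K D ℓ) (hD : j < D) (hl : j < ℓ)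
    {N P : Finset V} (hNP : Disjoint N P) {φ : Finset V → k}
    (hφ : ∀ G, N ⊆ G → #G = j + 1 → P ∪ G \ N ∈ K.faces →
      ∑ v ∈ G \ N, vertexSign v G • φ (G.erase v) = 0) :
    ∃ ψ : Finset V → k, ∀ F, N ⊆ F → #F = j → P ∪ F \ N ∈ K.faces →
      φ F = ∑ v ∈ F \ N, vertexSign v F • ψ (F.erase v) := by
  by_cases hj : #N ≤ j
  · obtain ⟨i, rfl⟩ := Nat.exists_eq_add_of_le hj
    obtain ⟨ψ, hψ⟩ := (h.acyclic_union (i := i) hNP (by omega) (by omega)).exists_coboundary_sdiff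
      (fun s hs => hs.1) fun G hNG hG hGK => hφ G hNG hG hGK.2
    exact ⟨ψ, fun F hNF hF hFK => hψ F hNF hF ⟨disjoint_sdiff, hFK⟩⟩
  · exact ⟨0, fun F hNF hF _ => (hj (hF ▸ card_le_card hNF)).elim⟩

lemma HasAcyclicLinks.exists_coeff_eq_sum [Fintype V] (h : HasAcyclicLinks k K D ℓ) (hD : j < D)
    (hl : j < ℓ) {f : Finset V → MvPolynomial V k}
    (hf : ∀ G, #G = j + 1 → koszul (X : V → MvPolynomial V k) f G ∈ srIdeal k K) (a : V →₀ ℕ) :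
    ∃ ψ : Finset V → k, ∀ F m, #F = j → squarefreeExponent Fᶜ + m = a → m.support ∈ K.faces →
      coeff m (f F) = ∑ v ∈ F \ a.supportᶜ, vertexSign v F • ψ (F.erase v) := by
  have hNP : Disjoint a.supportᶜ ({v | 2 ≤ a v} : Finset V) := disjoint_left.2 fun v hv hv' => by
    simp_all
  obtain ⟨ψ, hψ⟩ := h.exists_coboundary hD hl hNP
    (φ := fun F => coeff a ((∏ u ∈ Fᶜ, (X u : MvPolynomial V k)) * f F)) fun G hNG hG hGK => by
      have ha : squarefreeExponent Gᶜ + (a - squarefreeExponent Gᶜ) = a :=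
        add_tsub_cancel_of_le (squarefreeExponent_le_iff.2 (compl_le_iff_compl_le.1 hNG))
      rw [← support_eq_of_add_eq ha] at hGK
      rw [← coeff_koszul f ha, mem_srIdeal_iff.1 (hf G hG) _ hGK]
  refine ⟨ψ, fun F m hF ha hm => ?_⟩
  rw [← hψ F (compl_support_subset_of_add_eq ha) hF (support_eq_of_add_eq ha ▸ hm),
    prod_X_eq_monomial, ← ha, coeff_monomial_mul, one_mul]

lemma HasAcyclicLinks.exists_sub_koszul_mem [Finite V] (h : HasAcyclicLinks k K D ℓ) (hD : j < D)
    (hl : j < ℓ) {f : Finset V → MvPolynomial V k}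
    (hf : ∀ G, #G = j + 1 → koszul (X : V → MvPolynomial V k) f G ∈ srIdeal k K) :
    ∃ b : Finset V → MvPolynomial V k, ∀ F, #F = j →
      f F - koszul (X : V → MvPolynomial V k) b F ∈ srIdeal k K := by
  cases nonempty_fintype V
  choose ψ hψ using h.exists_coeff_eq_sum hD hl hf
  let A : Finset (V →₀ ℕ) :=
    univ.biUnion fun F => (f F).support.image fun m => squarefreeExponent Fᶜ + m
  let B : Finset V → MvPolynomial V k := fun E => ∑ a ∈ A, monomial a (ψ a E)
  have hB : ∀ E a, coeff a (B E) = if a ∈ A then ψ a E else 0 := fun E a => by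
    simp [B, coeff_sum, coeff_monomial]
  refine ⟨fun E => (B E).divMonomial (squarefreeExponent Eᶜ), fun F hF =>
    mem_srIdeal_iff.2 fun m hm => ?_⟩
  obtain ⟨a, ha⟩ : ∃ a, squarefreeExponent Fᶜ + m = a := ⟨_, rfl⟩
  have hterm : ∀ v ∈ F \ a.supportᶜ, coeff a ((∏ u ∈ (F.erase v)ᶜ, (X u : MvPolynomial V k)) *
      ((B (F.erase v)).divMonomial (squarefreeExponent (F.erase v)ᶜ))) =
        if a ∈ A then ψ a (F.erase v) else 0 := fun v hv => by
    have hle : squarefreeExponent (F.erase v)ᶜ ≤ a := by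
      rw [squarefreeExponent_le_iff, compl_erase, insert_subset_iff]
      exact ⟨notMem_compl.1 (mem_sdiff.1 hv).2,
        compl_le_iff_compl_le.1 (compl_support_subset_of_add_eq ha)⟩
    rw [prod_X_eq_monomial, coeff_monomial_mul', if_pos hle, coeff_divMonomial, one_mul,
      add_tsub_cancel_of_le hle, hB]
  rw [coeff_sub, coeff_koszul _ ha, sum_congr rfl fun v hv => by rw [hterm v hv], sub_eq_zero]
  by_cases haA : a ∈ A
  · simpa only [if_pos haA] using hψ a F m hF ha hm
  · simp only [if_neg haA, smul_zero, sum_const_zero]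
    by_contra hne
    exact haA (mem_biUnion.2 ⟨F, mem_univ _, mem_image.2 ⟨m, mem_support_iff.2 hne, ha⟩⟩)

lemma HasAcyclicLinks.koszulExact [Finite V] {n : ℕ} (h : HasAcyclicLinks k K D ℓ)
    (hD : n ≤ D) (hl : n ≤ ℓ) :
    KoszulExact (SRRing k K) (fun v => Ideal.Quotient.mk (srIdeal k K) (X v)) n := by
  intro j hj c hc
  let π := Ideal.Quotient.mk (srIdeal k K)
  have hπ : ∀ (g : Finset V → MvPolynomial V k) F,
      koszul (fun v => π (X v)) (π ∘ g) F = π (koszul (X : V → MvPolynomial V k) g F) :=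
    fun g F => by
    simp only [koszul_apply, map_sum, map_zsmul, smul_eq_mul, map_mul, Function.comp_apply]
  choose f hf using fun F => Ideal.Quotient.mk_surjective (I := srIdeal k K) (c F)
  obtain rfl : π ∘ f = c := funext hf
  obtain ⟨b, hb⟩ := h.exists_sub_koszul_mem (hj.trans_le hD) (hj.trans_le hl) (f := f)
    fun G hG => Ideal.Quotient.eq_zero_iff_mem.1 ((hπ f G).symm.trans (hc G hG))
  exact ⟨π ∘ b, fun F hF => (Ideal.Quotient.eq.2 (hb F hF)).trans (hπ b F).symm⟩

end SComplex

section SerreDepth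

open RingTheory.Sequence IsLocalRing

/-- The inequality of Serre's condition `(S_ℓ)` for the local ring `A`, witnessed by a sequence in
the maximal ideal whose length is at least `min ℓ (dim A)`. -/
def HasSerreDepth (ℓ : ℕ) (A : Type*) [CommRing A] [IsLocalRing A] : Prop :=
  ∃ rs : List A, (∀ r ∈ rs, r ∈ maximalIdeal A) ∧ IsWeaklyRegular A rs ∧
    min (ℓ : ℕ∞) (maximalIdeal A).height ≤ rs.length

lemma length_le_height_of_isRegular {A : Type*} [CommRing A] [IsLocalRing A] [IsNoetherianRing A]
    {rs : List A} (h : IsRegular A rs) : (rs.length : ℕ∞) ≤ (maximalIdeal A).height := by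
  have : Nontrivial (A ⧸ Ideal.ofList rs) :=
    Ideal.Quotient.nontrivial_iff.2 fun htop => h.top_ne_smul (by simp [htop])
  have hdim : (rs.length : WithBot ℕ∞) ≤ ringKrullDim A :=
    calc (rs.length : WithBot ℕ∞) = 0 + rs.length := (zero_add _).symm
      _ ≤ ringKrullDim (A ⧸ Ideal.ofList rs) + rs.length :=
        add_le_add_left ringKrullDim_nonneg_of_nontrivial _
      _ = ringKrullDim A := ringKrullDim_add_length_eq_ringKrullDim_of_isRegular rs h
  rw [← maximalIdeal_height_eq_ringKrullDim] at hdim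
  exact_mod_cast hdim

lemma length_le_depthIn {A : Type} [CommRing A] [IsLocalRing A] [IsNoetherianRing A]
    {rs : List A} (hm : ∀ r ∈ rs, r ∈ maximalIdeal A) (hr : IsWeaklyRegular A rs) :
    rs.length ≤ depthIn A (maximalIdeal A) := by
  obtain ⟨d, hd⟩ := ENat.ne_top_iff_exists.1
    (Ideal.height_ne_top (I := maximalIdeal A) (Ideal.IsPrime.ne_top inferInstance))
  refine le_csSup ⟨d, ?_⟩ ⟨rs, rfl, hm, .of_isWeaklyRegular_of_mem_maximalIdeal A hm hr⟩
  rintro _ ⟨ts, rfl, -, ht⟩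
  exact Nat.cast_le.1 ((length_le_height_of_isRegular ht).trans_eq hd.symm)

lemma HasSerreDepth.le_depthIn {ℓ : ℕ} {A : Type} [CommRing A] [IsLocalRing A]
    [IsNoetherianRing A] (h : HasSerreDepth ℓ A) :
    min ((ℓ : ℕ∞) : WithBot ℕ∞) (ringKrullDim A) ≤
      ((depthIn A (maximalIdeal A) : ℕ∞) : WithBot ℕ∞) := by
  obtain ⟨rs, hm, hr, hl⟩ := h
  rw [← maximalIdeal_height_eq_ringKrullDim, ← WithBot.coe_min, WithBot.coe_le_coe]
  exact hl.trans (Nat.cast_le.2 (length_le_depthIn hm hr))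

lemma HasSerreDepth.of_ringEquiv {ℓ : ℕ} {A B : Type*} [CommRing A] [IsLocalRing A] [CommRing B]
    [IsLocalRing B] (e : A ≃+* B) (h : HasSerreDepth ℓ A) : HasSerreDepth ℓ B := by
  obtain ⟨rs, hm, hr, hl⟩ := h
  refine ⟨rs.map e, List.forall_mem_map.2 fun r hrs => ?_, ?_, ?_⟩
  · simpa [mem_maximalIdeal, mem_nonunits_iff] using hm r hrs
  · refine (AddEquiv.isWeaklyRegular_congr (e := e.toAddEquiv) ?_).1 hr
    rw [List.forall₂_map_right_iff, List.forall₂_same]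
    exact fun r _ x => map_mul e r x
  · have hdim := ringKrullDim_eq_of_ringEquiv e
    rw [← maximalIdeal_height_eq_ringKrullDim, ← maximalIdeal_height_eq_ringKrullDim,
      WithBot.coe_inj] at hdim
    rwa [List.length_map, ← hdim]

lemma HasSerreDepth.of_isWeaklyRegular {ℓ : ℕ} {R : Type*} [CommRing R] (p : Ideal R) [p.IsPrime]
    {rs : List R} (hm : ∀ r ∈ rs, r ∈ p) (hr : IsWeaklyRegular R rs)
    (hl : min (ℓ : ℕ∞) p.height ≤ rs.length) : HasSerreDepth ℓ (Localization.AtPrime p) := by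
  have hp : (maximalIdeal (Localization.AtPrime p)).under R = p :=
    IsLocalization.AtPrime.under_maximalIdeal _ p
  refine ⟨rs.map (algebraMap R _), List.forall_mem_map.2 fun r hrs => ?_,
    hr.of_isLocalization _ p.primeCompl, ?_⟩
  · rw [← Ideal.mem_comap, ← Ideal.under_def, hp]
    exact hm r hrs
  · rwa [List.length_map, ← IsLocalization.height_under p.primeCompl, hp]

end SerreDepth

section Polynomial

open RingTheory.Sequence IsLocalRing Polynomial

lemma mem_ofList_map_C_iff {A : Type*} [CommRing A] {rs : List A} {f : A[X]} :
    f ∈ Ideal.ofList (rs.map C) ↔ f.map (Ideal.Quotient.mk (Ideal.ofList rs)) = 0 := by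
  rw [← Ideal.map_ofList, Ideal.mem_map_C_iff, Polynomial.ext_iff]
  simp [Ideal.Quotient.eq_zero_iff_mem]

lemma isWeaklyRegular_map_C_append_monic {A : Type*} [CommRing A] {rs : List A}
    (hr : IsWeaklyRegular A rs) {g : A[X]} (hg : g.Monic) :
    IsWeaklyRegular A[X] (rs.map C ++ [g]) := by
  rw [isWeaklyRegular_append_iff]
  refine ⟨hr.of_flat (S := A[X]), ?_⟩
  rw [isWeaklyRegular_singleton_iff, isSMulRegular_iff_right_eq_zero_of_smul]
  intro f hf
  obtain ⟨f, rfl⟩ := Submodule.Quotient.mk_surjective _ f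
  rw [← Submodule.Quotient.mk_smul] at hf
  rw [Submodule.Quotient.mk_eq_zero, smul_eq_mul, Ideal.mul_top, mem_ofList_map_C_iff] at hf ⊢
  rwa [smul_eq_mul, Polynomial.map_mul, (hg.map _).mul_right_eq_zero_iff] at hf

lemma height_le_height_maximalIdeal_add_one {A : Type*} [CommRing A] [IsLocalRing A]
    [IsNoetherianRing A] (P : Ideal A[X]) [P.IsPrime] :
    P.height ≤ (maximalIdeal A).height + 1 := by
  have h : (P.height : WithBot ℕ∞) ≤ ringKrullDim A[X] :=
    Ideal.height_le_ringKrullDim_of_ne_top Ideal.IsPrime.ne_top'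
  rw [Polynomial.ringKrullDim_of_isNoetherianRing, ← maximalIdeal_height_eq_ringKrullDim] at h
  exact_mod_cast h

/-- A prime lying over the maximal ideal is either extended from it, or generated over it by one
monic polynomial, which extends the regular sequence. -/
lemma HasSerreDepth.polynomial_of_isLocalRing {ℓ : ℕ} {A : Type*} [CommRing A] [IsLocalRing A]
    [IsNoetherianRing A] (h : HasSerreDepth ℓ A) (P : Ideal A[X]) [P.IsPrime]
    (hP : P.comap C = maximalIdeal A) : HasSerreDepth ℓ (Localization.AtPrime P) := by
  obtain ⟨rs, hm, hr, hl⟩ := h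
  have hmem : ∀ r ∈ rs.map C, r ∈ P := List.forall_mem_map.2 fun r hrs => by
    rw [← Ideal.mem_comap, hP]
    exact hm r hrs
  by_cases hext : P = (P.comap C).map C
  · refine .of_isWeaklyRegular P hmem (hr.of_flat (S := A[X])) ?_
    rwa [hext, hP, height_map_C, List.length_map]
  · obtain ⟨g, hg, hPg⟩ := Polynomial.exists_monic_span_sup_map_eq A P
      (hP ▸ maximalIdeal.isMaximal A) hext
    have hgP : g ∈ P := by
      rw [hPg]
      exact Ideal.mem_sup_right (Ideal.mem_span_singleton_self g)
    refine .of_isWeaklyRegular P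
      (List.forall_mem_append.2 ⟨hmem, List.forall_mem_singleton.2 hgP⟩)
      (isWeaklyRegular_map_C_append_monic hr hg) ?_
    calc min (ℓ : ℕ∞) P.height ≤ min ((ℓ : ℕ∞) + 1) ((maximalIdeal A).height + 1) :=
          min_le_min le_self_add (height_le_height_maximalIdeal_add_one P)
      _ = min (ℓ : ℕ∞) (maximalIdeal A).height + 1 := min_add_add_right _ _ _
      _ ≤ rs.length + 1 := by gcongr
      _ = (rs.map C ++ [g]).length := by simp

lemma HasSerreDepth.polynomial {ℓ : ℕ} {B : Type*} [CommRing B] [IsNoetherianRing B]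
    (p : Ideal B[X]) [p.IsPrime] (h : HasSerreDepth ℓ (Localization.AtPrime (p.comap C))) :
    HasSerreDepth ℓ (Localization.AtPrime p) := by
  let q := p.comap C
  let A := Localization.AtPrime q
  let M := Submonoid.map C.toMonoidHom q.primeCompl
  let _ : Algebra B[X] A[X] := Polynomial.algebra B A
  have : IsLocalization M A[X] := Polynomial.isLocalization _ _
  have hMp : Disjoint (M : Set B[X]) (p : Set B[X]) := by
    rw [Set.disjoint_left]
    rintro _ ⟨b, hb, rfl⟩ hbp
    exact hb hbp
  let P := p.map (algebraMap B[X] A[X])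
  have : P.IsPrime := IsLocalization.isPrime_of_isPrime_disjoint M _ _ ‹_› hMp
  have hPp : P.under B[X] = p := IsLocalization.under_map_of_isPrime_disjoint M _ ‹_› hMp
  have : IsLocalization.AtPrime (Localization.AtPrime P) p := by
    convert IsLocalization.isLocalization_isLocalization_atPrime_isLocalization M
      (Localization.AtPrime P) P
    exact hPp.symm
  have hPC : P.comap C = maximalIdeal A := by
    rw [← IsLocalization.map_under q.primeCompl A (P.comap C),
      ← IsLocalization.map_under q.primeCompl A (maximalIdeal A),
      IsLocalization.AtPrime.under_maximalIdeal A q, Ideal.under_def, Ideal.comap_comap,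
      ← Polynomial.algebraMap_eq (R := A), ← IsScalarTower.algebraMap_eq B A A[X],
      IsScalarTower.algebraMap_eq B B[X] A[X], ← Ideal.comap_comap, ← Ideal.under_def B[X], hPp]
    rfl
  exact (h.polynomial_of_isLocalRing P hPC).of_ringEquiv (IsLocalization.algEquiv p.primeCompl
    (Localization.AtPrime P) (Localization.AtPrime p)).toRingEquiv

end Polynomial

section Surjection

lemma isLocalization_of_surjective {R R' S : Type*} [CommRing R] [CommRing R'] [CommRing S]
    [Algebra R R'] [Algebra R' S] [Algebra R S] [IsScalarTower R R' S] (M : Submonoid R)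
    (hsurj : Function.Surjective (algebraMap R R'))
    (hker : ∀ x, algebraMap R R' x = 0 → ∃ m ∈ M, m * x = 0)
    [IsLocalization (Algebra.algebraMapSubmonoid R' M) S] : IsLocalization M S := by
  have halg := IsScalarTower.algebraMap_apply R R' S
  refine ⟨fun y => ?_, fun z => ?_, fun {x y} hxy => ?_⟩
  · rw [halg]
    exact IsLocalization.map_units S
      (⟨_, Algebra.mem_algebraMapSubmonoid_of_mem y⟩ : Algebra.algebraMapSubmonoid R' M)
  · obtain ⟨⟨a', _, b, hb, rfl⟩, hab⟩ :=
      IsLocalization.surj (Algebra.algebraMapSubmonoid R' M) z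
    obtain ⟨a, rfl⟩ := hsurj a'
    exact ⟨⟨a, b, hb⟩, by simpa [halg] using hab⟩
  · rw [halg, halg] at hxy
    obtain ⟨⟨_, c, hc, rfl⟩, hcxy⟩ :=
      IsLocalization.exists_of_eq (M := Algebra.algebraMapSubmonoid R' M) hxy
    obtain ⟨m, hm, hmc⟩ := hker (c * (x - y)) (by
      rw [map_mul, map_sub, mul_sub, sub_eq_zero]
      exact hcxy)
    exact ⟨⟨m * c, M.mul_mem hm hc⟩, by linear_combination hmc⟩

lemma HasSerreDepth.of_surjective {ℓ : ℕ} {R R' : Type*} [CommRing R] [CommRing R'] {π : R →+* R'}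
    (hπ : Function.Surjective π) {p : Ideal R} [p.IsPrime] {s : R} (hs : s ∉ p)
    (hk : ∀ x, π x = 0 → s * x = 0)
    (h : ∀ (q : Ideal R') [q.IsPrime], q.comap π = p → HasSerreDepth ℓ (Localization.AtPrime q)) :
    HasSerreDepth ℓ (Localization.AtPrime p) := by
  have hker : RingHom.ker π ≤ p := fun x hx =>
    (Ideal.IsPrime.mem_or_mem ‹_› (hk x hx ▸ p.zero_mem)).resolve_left hs
  have : (p.map π).IsPrime := Ideal.map_isPrime_of_surjective hπ hker
  have hc : (p.map π).comap π = p := by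
    rw [Ideal.comap_map_of_surjective π hπ]
    exact sup_eq_left.2 hker
  let _ := π.toAlgebra
  have hM : Algebra.algebraMapSubmonoid R' p.primeCompl = (p.map π).primeCompl := by
    refine le_antisymm ?_ fun y hy => ?_
    · rintro _ ⟨x, hx, rfl⟩ hxp
      exact hx (hc ▸ hxp)
    · obtain ⟨x, rfl⟩ := hπ y
      exact ⟨x, fun hx => hy (Ideal.mem_map_of_mem π hx), rfl⟩
  have : IsLocalization (Algebra.algebraMapSubmonoid R' p.primeCompl)
      (Localization.AtPrime (p.map π)) := by
    rw [hM]
    infer_instance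
  have : IsLocalization.AtPrime (Localization.AtPrime (p.map π)) p :=
    isLocalization_of_surjective p.primeCompl hπ fun x hx => ⟨s, hs, hk x hx⟩
  exact (h (p.map π) hc).of_ringEquiv (IsLocalization.algEquiv p.primeCompl
    (Localization.AtPrime (p.map π)) (Localization.AtPrime p)).toRingEquiv

end Surjection

universe u in
lemma exists_algHom_apply_eq_zero_iff_mul_eq_zero (k : Type*) [CommRing k] {R : Type u} [CommRing R]
    [Algebra k R] (x : R) :
    ∃ (A : Type u) (_ : CommRing A) (_ : Algebra k A) (f : R →ₐ[k] A), ∀ a, f a = 0 ↔ x * a = 0 :=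
  ⟨R ⧸ Ideal.torsionOf R R x, _, _, Ideal.Quotient.mkₐ k _, fun a => by
    rw [Ideal.Quotient.mkₐ_eq_mk, Ideal.Quotient.eq_zero_iff_mem, Ideal.mem_torsionOf_iff,
      smul_eq_mul, mul_comm]⟩

namespace SComplex

variable {V : Type} [DecidableEq V] {k : Type} [Field k]

section Generators

variable (k) in
/-- The class of a variable in the Stanley–Reisner ring. -/
noncomputable def srX (K : SComplex V) (v : V) : SRRing k K :=
  Ideal.Quotient.mk (srIdeal k K) (MvPolynomial.X v)

variable {K : SComplex V}

lemma prod_srX_eq_zero {s : Finset V} (hs : s ∉ K.faces) : ∏ v ∈ s, srX k K v = 0 := by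
  simp only [srX]
  rw [← map_prod, Ideal.Quotient.eq_zero_iff_mem]
  exact Ideal.subset_span ⟨s, hs, rfl⟩

lemma singleton_mem_faces_of_srX_notMem {v : V} {p : Ideal (SRRing k K)} (hv : srX k K v ∉ p) :
    {v} ∈ K.faces := by
  by_contra h
  refine hv ?_
  rw [← prod_singleton (srX k K) v, prod_srX_eq_zero h]
  exact p.zero_mem

lemma adjoin_range_srX : Algebra.adjoin k (Set.range (srX k K)) = ⊤ := by
  have h := congrArg (Subalgebra.map (Ideal.Quotient.mkₐ k (srIdeal k K)))
    (MvPolynomial.adjoin_range_X (R := k) (σ := V))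
  rwa [AlgHom.map_adjoin, ← Set.range_comp, Algebra.map_top,
    (AlgHom.range_eq_top _).2 (Ideal.Quotient.mkₐ_surjective k _)] at h

variable {A : Type*} [CommRing A] [Algebra k A]

lemma srRing_algHom_ext {f g : SRRing k K →ₐ[k] A} (h : ∀ v, f (srX k K v) = g (srX k K v)) :
    f = g :=
  AlgHom.ext_of_adjoin_eq_top adjoin_range_srX (Set.forall_mem_range.2 h)

/-- The homomorphism from the Stanley–Reisner ring given by the images of the variables. -/
noncomputable def srLift (x : V → A) (hx : ∀ s ∉ K.faces, ∏ v ∈ s, x v = 0) :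
    SRRing k K →ₐ[k] A :=
  Ideal.Quotient.liftₐ (srIdeal k K) (MvPolynomial.aeval x) fun f hf => by
    suffices srIdeal k K ≤ RingHom.ker (MvPolynomial.aeval x) from this hf
    rw [srIdeal, Ideal.span_le]
    rintro _ ⟨s, hs, rfl⟩
    simpa using hx s hs

lemma srLift_srX (x : V → A) (hx : ∀ s ∉ K.faces, ∏ v ∈ s, x v = 0) (v : V) :
    srLift x hx (srX k K v) = x v :=
  MvPolynomial.aeval_X x v

end Generators

section Height

variable {K : SComplex V}

lemma eq_span_range_srX {p : Ideal (SRRing k K)} (htop : p ≠ ⊤) (hp : ∀ v, srX k K v ∈ p) :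
    p = Ideal.span (Set.range (srX k K)) := by
  have hle : Ideal.span (Set.range (srX k K)) ≤ p := Ideal.span_le.2 (Set.range_subset_iff.2 hp)
  refine le_antisymm (fun a ha => ?_) hle
  let π := Ideal.Quotient.mkₐ k (Ideal.span (Set.range (srX k K)))
  have hπ : Algebra.adjoin k (Set.range (srX k K)) ≤ (⊥ : Subalgebra k _).comap π := by
    refine Algebra.adjoin_le (Set.range_subset_iff.2 fun v => ?_)
    rw [SetLike.mem_coe, Subalgebra.mem_comap, Ideal.Quotient.mkₐ_eq_mk,
      Ideal.Quotient.eq_zero_iff_mem.2 (Ideal.subset_span (Set.mem_range_self v))]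
    exact zero_mem _
  rw [adjoin_range_srX] at hπ
  obtain ⟨c, hc⟩ := Algebra.mem_bot.1 (hπ (Algebra.mem_top (x := a)))
  have hac : algebraMap k (SRRing k K) c - a ∈ Ideal.span (Set.range (srX k K)) :=
    Ideal.Quotient.eq.1 hc
  have hcp : algebraMap k (SRRing k K) c ∈ p := by
    simpa using add_mem (hle hac) ha
  obtain rfl : c = 0 := by
    by_contra hne
    exact htop (p.eq_top_of_isUnit_mem hcp ((IsUnit.mk0 c hne).map _))
  rwa [map_zero, zero_sub, neg_mem_iff] at hac

variable (k) in
/-- The sum of the squarefree monomials of degree `j` supported on faces, which is the elementary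
symmetric polynomial in the variables. For `1 ≤ j ≤ d` these form the universal system of parameters
of the Stanley–Reisner ring. -/
noncomputable def faceSum (K : SComplex V) (j : ℕ) : SRRing k K :=
  ∑ G ∈ K.faces with #G = j, ∏ v ∈ G, srX k K v

lemma faceSum_mem {p : Ideal (SRRing k K)} (hp : ∀ v, srX k K v ∈ p) {j : ℕ} (hj : 0 < j) :
    faceSum k K j ∈ p := by
  refine sum_mem fun G hG => ?_
  obtain ⟨v, hv⟩ := card_pos.1 ((mem_filter.1 hG).2 ▸ hj)
  exact Ideal.mem_of_dvd p (dvd_prod_of_mem _ hv) (hp v)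

variable [Finite V]

/-- If `F` is the set of variables outside `q`, then `faceSum k K #F` is congruent modulo `q` to the
monomial of `F`. -/
lemma srX_mem_of_faceSum_mem {q : Ideal (SRRing k K)} [hq : q.IsPrime]
    (h : ∀ j, 0 < j → j ≤ K.rank → faceSum k K j ∈ q) (v : V) : srX k K v ∈ q := by
  classical
  cases nonempty_fintype V
  by_contra hv
  let F : Finset V := {w | srX k K w ∉ q}
  have hF : ∏ w ∈ F, srX k K w ∉ q := by simp [hq.prod_mem_iff, F]
  have hFK : F ∈ K.faces := by
    by_contra hFK
    exact hF (prod_srX_eq_zero (k := k) hFK ▸ q.zero_mem)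
  have hsum := h #F (card_pos.2 ⟨v, by simpa [F] using hv⟩) (le_sup (f := card) hFK)
  have hmem : F ∈ {G ∈ K.faces | #G = #F} := mem_filter.2 ⟨hFK, rfl⟩
  rw [faceSum, ← add_sum_erase _ _ hmem] at hsum
  refine hF ((Ideal.add_mem_iff_left q (sum_mem fun G hG => ?_)).1 hsum)
  obtain ⟨hne, hG⟩ := mem_erase.1 hG
  obtain ⟨w, hwG, hwF⟩ := not_subset.1 fun hGF : G ⊆ F =>
    hne (eq_of_subset_of_card_le hGF (mem_filter.1 hG).2.ge)
  exact Ideal.mem_of_dvd q (dvd_prod_of_mem _ hwG) (by simpa [F] using hwF)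

lemma height_le_rank {p : Ideal (SRRing k K)} [hp : p.IsPrime] (h : ∀ v, srX k K v ∈ p) :
    p.height ≤ K.rank := by
  classical
  let s : Finset (SRRing k K) := (Icc 1 K.rank).image (faceSum k K)
  have hmin : p ∈ (Ideal.span (s : Set (SRRing k K))).minimalPrimes := by
    refine ⟨⟨hp, Ideal.span_le.2 ?_⟩, fun q ⟨hq, hsq⟩ _ => ?_⟩
    · simp only [s, coe_image, Set.image_subset_iff]
      exact fun j hj => faceSum_mem h (mem_Icc.1 hj).1
    · rw [eq_span_range_srX hp.ne_top h, Ideal.span_le, Set.range_subset_iff]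
      exact srX_mem_of_faceSum_mem fun j hj hjK =>
        hsq (Ideal.subset_span (mem_image_of_mem _ (mem_Icc.2 ⟨hj, hjK⟩)))
  refine (Ideal.height_le_card_of_mem_minimalPrimes_span_finset hmin).trans (Nat.cast_le.2 ?_)
  exact card_image_le.trans (by simp)

end Height

section VertexLink

open Polynomial

variable {K : SComplex V} {v : V}

lemma srX_link_self : srX k (K.link {v}) v = 0 := by
  rw [← prod_singleton (srX k (K.link {v})) v, prod_srX_eq_zero]
  simp [link]

lemma insert_notMem_faces_of_notMem_link {s : Finset V} (hs : s ∉ (K.link {v}).faces)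
    (hv : v ∉ s) : insert v s ∉ K.faces := fun h =>
  hs (mem_filter.2 ⟨K.down_closed h (subset_insert _ _), disjoint_singleton_left.2 hv, h⟩)

lemma erase_notMem_link_of_notMem_faces {s : Finset V} (hs : s ∉ K.faces) :
    s.erase v ∉ (K.link {v}).faces := fun h =>
  hs (K.down_closed (mem_filter.1 h).2.2 (by
    rw [← insert_eq]
    exact subset_insert_iff.2 subset_rfl))

lemma rank_link_lt (hv : {v} ∈ K.faces) : (K.link {v}).rank < K.rank := by
  refine (Finset.sup_lt_iff (lt_of_lt_of_le ?_ (le_sup (f := card) hv))).2 fun G hG => ?_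
  · rw [card_singleton]
    exact one_pos
  · obtain ⟨-, hdisj, hG⟩ := mem_filter.1 hG
    have := le_sup (f := card) hG
    rw [card_union_of_disjoint hdisj, card_singleton, add_comm] at this
    exact this

variable (k K v) in
/-- The projection from the Stanley–Reisner ring of `K` to that of the star of `v`, which is the
polynomial ring over the Stanley–Reisner ring of the link in the variable of `v`. -/
noncomputable def toLink : SRRing k K →ₐ[k] (SRRing k (K.link {v}))[X] :=
  srLift (fun w => if w = v then X else C (srX k (K.link {v}) w)) fun s hs => by
    refine zero_dvd_iff.1 (dvd_trans (zero_dvd_iff.2 ?_) (prod_dvd_prod_of_subset _ _ _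
      (erase_subset v s)))
    rw [prod_congr rfl fun w hw => if_neg (ne_of_mem_erase hw), ← map_prod,
      prod_srX_eq_zero (erase_notMem_link_of_notMem_faces hs), map_zero]

lemma toLink_srX_self : toLink k K v (srX k K v) = X :=
  (srLift_srX _ _ _).trans (if_pos rfl)

lemma toLink_srX_of_ne {w : V} (h : w ≠ v) :
    toLink k K v (srX k K w) = C (srX k (K.link {v}) w) :=
  (srLift_srX _ _ _).trans (if_neg h)

lemma toLink_surjective : Function.Surjective (toLink k K v) := by
  have hC : Algebra.adjoin k (Set.range (srX k (K.link {v}))) ≤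
      (toLink k K v).range.comap CAlgHom := by
    refine Algebra.adjoin_le (Set.range_subset_iff.2 fun w => ?_)
    by_cases hw : w = v
    · rw [hw, srX_link_self]
      exact zero_mem _
    · exact ⟨_, toLink_srX_of_ne hw⟩
  rw [adjoin_range_srX] at hC
  have hX : X ∈ (toLink k K v).range := ⟨_, toLink_srX_self⟩
  rw [← AlgHom.range_eq_top, eq_top_iff]
  intro f _
  induction f using Polynomial.induction_on' with
  | add f g hf hg => exact add_mem (hf trivial) (hg trivial)
  | monomial n a =>
    rw [← C_mul_X_pow_eq_monomial]
    exact mul_mem (hC trivial) (pow_mem hX n)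

section OfLink

variable {A : Type*} [CommRing A] [Algebra k A]

/-- The factorization through `toLink` of a homomorphism that kills the annihilator of the variable
of `v`. -/
noncomputable def ofLink (f : SRRing k K →ₐ[k] A) (hf : ∀ a, srX k K v * a = 0 → f a = 0) :
    (SRRing k (K.link {v}))[X] →ₐ[k] A :=
  aevalTower (srLift (fun w => if w = v then 0 else f (srX k K w)) fun s hs => by
    by_cases hv : v ∈ s
    · exact prod_eq_zero hv (if_pos rfl)
    · rw [prod_congr rfl fun w hw => if_neg (ne_of_mem_of_not_mem hw hv), ← map_prod]
      refine hf _ ?_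
      rw [← prod_insert hv, prod_srX_eq_zero (insert_notMem_faces_of_notMem_link hs hv)])
    (f (srX k K v))

lemma ofLink_comp_toLink (f : SRRing k K →ₐ[k] A) (hf : ∀ a, srX k K v * a = 0 → f a = 0) :
    (ofLink f hf).comp (toLink k K v) = f := by
  refine srRing_algHom_ext fun w => ?_
  rw [AlgHom.comp_apply]
  by_cases hw : w = v
  · rw [hw, toLink_srX_self, ofLink, aevalTower_X]
  · rw [toLink_srX_of_ne hw, ofLink, aevalTower_C, srLift_srX, if_neg hw]

end OfLink

lemma srX_mul_eq_zero_of_toLink_eq_zero {a : SRRing k K} (h : toLink k K v a = 0) :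
    srX k K v * a = 0 := by
  obtain ⟨A, _, _, f, hf⟩ := exists_algHom_apply_eq_zero_iff_mul_eq_zero k (srX k K v)
  rw [← hf, ← ofLink_comp_toLink f fun b => (hf b).2, AlgHom.comp_apply, h, map_zero]

end VertexLink

namespace HasAcyclicLinks

variable [Finite V] {K : SComplex V} {D ℓ : ℕ}

lemma hasSerreDepth_of_forall_srX_mem (h : HasAcyclicLinks k K D ℓ) (hD : K.rank ≤ D)
    (p : Ideal (SRRing k K)) [p.IsPrime] (hp : ∀ v, srX k K v ∈ p) :
    HasSerreDepth ℓ (Localization.AtPrime p) := by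
  obtain ⟨_, _⟩ := exists_wellFoundedLT V
  obtain ⟨rs, hlen, hmem, hreg⟩ :=
    (h.koszulExact (min_le_left D ℓ) (min_le_right D ℓ)).exists_isWeaklyRegular
  refine .of_isWeaklyRegular p (fun r hr => ?_) hreg ?_
  · exact Ideal.span_le.2 (Set.range_subset_iff.2 hp) (hmem r hr)
  · rw [hlen, Nat.mono_cast.map_min, min_comm]
    exact min_le_min_right _ ((height_le_rank hp).trans (Nat.cast_le.2 hD))

/-- If some variable is not in `p`, the localization at `p` is one of the polynomial ring over the
Stanley–Reisner ring of the link of that vertex. -/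
lemma hasSerreDepth (h : HasAcyclicLinks k K D ℓ) (hD : K.rank ≤ D) (p : Ideal (SRRing k K))
    [p.IsPrime] : HasSerreDepth ℓ (Localization.AtPrime p) := by
  induction D generalizing K with
  | zero =>
    refine h.hasSerreDepth_of_forall_srX_mem hD p fun v => ?_
    by_contra hv
    exact absurd (rank_link_lt (singleton_mem_faces_of_srX_notMem hv)) (by omega)
  | succ D ih =>
    by_cases hp : ∀ v, srX k K v ∈ p
    · exact h.hasSerreDepth_of_forall_srX_mem hD p hp
    · obtain ⟨v, hv⟩ := not_forall.1 hp
      have hlt := rank_link_lt (singleton_mem_faces_of_srX_notMem hv)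
      exact .of_surjective (π := (toLink k K v).toRingHom) toLink_surjective hv
        (fun _ => srX_mul_eq_zero_of_toLink_eq_zero)
        fun q _ _ => .polynomial q (ih (h.link v) (by omega) _)

end HasAcyclicLinks

end SComplex

/-- If `H̃_{i-1}([Δ]_{>j}; k) = 0` whenever `i + j < d` and `0 ≤ i ≤ ℓ`
(where `d = dim k[Δ]`), then `k[Δ]` satisfies Serre's condition `(S_ℓ)`. -/
theorem serre_of_vanishing_of_truncations {V : Type} [DecidableEq V] [Fintype V]
    (k : Type) [Field k] (K : SComplex V) (ℓ : ℕ)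
    (h : ∀ i j : ℕ, i + j < K.rank → i ≤ ℓ → SComplex.HVanish k (K.trunc j) i) :
    SComplex.SerreS k ℓ K := by
  have hlinks : SComplex.HasAcyclicLinks k K K.rank ℓ :=
    SComplex.hasAcyclicLinks_of_trunc fun i j hij hi =>
      (SComplex.hVanish_iff_acyclic k (K.trunc j) i).1 (h i j hij hi)
  intro p _
  exact (hlinks.hasSerreDepth le_rfl p).le_depthIn
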